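/- arXiv:2112.02436 — 2 statements merged into one kernel-verified Lean document; each statement's English description precedes it below -/
import Mathlib

section
/- Suppose X ⊆ [n]^D has at least a·(1 + 3n/D)·N_{n,D} + b elements, where N_{n,D} is the size of the largest level set of [n]^D. Then X contains at least (b/(a!·n^a))·D^a pairs (x, y) with x ≼ y and r(y) − r(x) ≥ a. -/
open Classical

/-- The rank of `x ∈ {0,...,n-1}^D`: the sum of its coordinates. -/
def rank {n D : ℕ} (x : Fin D → Fin n) : ℕ := ∑ t, (x t : ℕ)

/-- `N_{n,D}`: the size of the middle layer `{x ∈ [n]^D : r(x) = ⌊(n-1)D/2⌋}`. -/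
noncomputable def middleLayerCard (n D : ℕ) : ℕ :=
  (Finset.univ.filter (fun x : Fin D → Fin n => rank x = (n - 1) * D / 2)).card


noncomputable def chainB {P : Type*} [Fintype P] (r : P → ℕ) (R : ℕ) (hR : ∀ x, r x ≤ R)
    (W : Matrix P P ℝ) (X : Finset P) (x : P) (j : ℕ) : ℝ :=
  if j = 0 then 1 else
    if x ∈ X then
      (if j = 1 then 1 else
        ∑ z, if _h : r z = r x + 1 then W x z * chainB r R hR W X z (j - 1) else 0)
    else ∑ z, if _h : r z = r x + 1 then W x z * chainB r R hR W X z j else 0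
termination_by R - r x
decreasing_by all_goals (have := hR z; omega)

theorem exists_chainB {P : Type*} [Fintype P] (r : P → ℕ)
    (W : Matrix P P ℝ) (hr : ∀ x y, W x y ≠ 0 → r y = r x + 1) (X : Finset P) :
    ∃ B : P → ℕ → ℝ, (∀ x, B x 0 = 1) ∧
      (∀ x ∈ X, B x 1 = 1) ∧
      (∀ x ∈ X, ∀ j, B x (j + 2) = ∑ z, W x z * B z (j + 1)) ∧
      (∀ x, x ∉ X → ∀ j, B x (j + 1) = ∑ z, W x z * B z (j + 1)) := by
  have hR : ∀ x, r x ≤ Finset.univ.sup r := fun x => Finset.le_sup (Finset.mem_univ x)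
  have key : ∀ x z (c : ℝ), (if _h : r z = r x + 1 then W x z * c else 0) = W x z * c := by
    intro x z c
    split_ifs with h
    · rfl
    · have : W x z = 0 := by
        by_contra h'
        exact h (hr x z h')
      simp [this]
  refine ⟨chainB r _ hR W X, ?_, ?_, ?_, ?_⟩
  · intro x; rw [chainB]; simp
  · intro x hx; rw [chainB]; simp [hx]
  · intro x hx j; rw [chainB]; simp only [key]; simp [hx]
  · intro x hx j; rw [chainB]; simp only [key]; simp [hx]

theorem abstract_chain {P : Type*} [Fintype P] (r : P → ℕ)
    (W : Matrix P P ℝ) (h0 : ∀ x y, 0 ≤ W x y) (hr : ∀ x y, W x y ≠ 0 → r y = r x + 1)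
    (hout : ∀ x, ∑ y, W x y ≤ 1) (hin : ∀ y, ∑ x, W x y ≤ 1) (X : Finset P) (a : ℕ) :
    (X.card : ℝ) - a * ∑ y, (1 - ∑ x, W x y) ≤
      ∑ x ∈ X, ∑ y ∈ X, if r x + a ≤ r y then (W ^ (r y - r x)) x y else 0 := by
  obtain ⟨B, hB0, hB1, hB2, hB3⟩ := exists_chainB r W hr X
  have hpow : ∀ k x y, 0 ≤ (W ^ k) x y := by
    intro k
    induction k with
    | zero => intro x y; rw [pow_zero, Matrix.one_apply]; split_ifs <;> norm_num
    | succ k ih =>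
      intro x y
      rw [pow_succ, Matrix.mul_apply]
      exact Finset.sum_nonneg fun z _ => mul_nonneg (ih _ _) (h0 _ _)
  set S : P → ℕ → ℝ := fun x j =>
    ∑ y ∈ X, if r x + j ≤ r y then (W ^ (r y - r x)) x y else 0 with hS
  have hSmono : ∀ x j, S x (j + 1) ≤ S x j := by
    intro x j
    apply Finset.sum_le_sum
    intro y _
    split_ifs with h1 h2 h2
    · exact le_rfl
    · omega
    · exact hpow _ _ _
    · exact le_rfl
  have hSstep : ∀ x j, ∑ z, W x z * S z j ≤ S x (j + 1) := by
    intro x j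
    simp only [hS, Finset.mul_sum]
    rw [Finset.sum_comm]
    apply Finset.sum_le_sum
    intro y _
    split_ifs with h
    · obtain ⟨k, hk⟩ : ∃ k, r y - r x = k + 1 := ⟨r y - r x - 1, by omega⟩
      rw [hk, pow_succ', Matrix.mul_apply]
      apply Finset.sum_le_sum
      intro z _
      by_cases hz : W x z = 0
      · simp [hz]
      · have := hr x z hz
        rw [if_pos (by omega), show r y - r z = k by omega]
    · apply Finset.sum_nonpos
      intro z _
      by_cases hz : W x z = 0
      · simp [hz]
      · have := hr x z hz
        rw [if_neg (by omega)]; simp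
  have hS0 : ∀ x ∈ X, 1 ≤ S x 0 := by
    intro x hx
    have : (if r x + 0 ≤ r x then (W ^ (r x - r x)) x x else 0) ≤ S x 0 := by
      apply Finset.single_le_sum (f := fun y => if r x + 0 ≤ r y then (W ^ (r y - r x)) x y else 0)
        _ hx
      intro y _
      split_ifs
      · exact hpow _ _ _
      · exact le_rfl
    simpa using this
  have hR : ∀ x, r x ≤ Finset.univ.sup r := fun x => Finset.le_sup (Finset.mem_univ x)
  have hind : ∀ m x, Finset.univ.sup r - r x < m →
      ∀ j, B x (j + 1) ≤ 1 ∧ B x (j + 1) ≤ S x j := by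
    intro m
    induction m with
    | zero => intro x hx; omega
    | succ m ih =>
      intro x hx
      have step1 : ∀ j, ∑ z, W x z * B z (j + 1) ≤ 1 := by
        intro j
        refine le_trans (Finset.sum_le_sum ?_) (hout x)
        intro z _
        by_cases hz : W x z = 0
        · simp [hz]
        · have h1 := hr x z hz
          have h2 := hR z
          have := (ih z (by omega) j).1
          nlinarith [h0 x z]
      have step2 : ∀ j, ∑ z, W x z * B z (j + 1) ≤ S x (j + 1) := by
        intro j
        refine le_trans (Finset.sum_le_sum ?_) (hSstep x j)
        intro z _
        by_cases hz : W x z = 0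
        · simp [hz]
        · have h1 := hr x z hz
          have h2 := hR z
          exact mul_le_mul_of_nonneg_left (ih z (by omega) j).2 (h0 x z)
      intro j
      by_cases hxX : x ∈ X
      · cases j with
        | zero =>
          rw [hB1 x hxX]
          exact ⟨le_rfl, hS0 x hxX⟩
        | succ j =>
          rw [hB2 x hxX]
          exact ⟨step1 j, step2 j⟩
      · rw [hB3 x hxX]
        exact ⟨step1 j, (step2 j).trans (hSmono x j)⟩
  have hB : ∀ x j, B x (j + 1) ≤ 1 ∧ B x (j + 1) ≤ S x j :=
    fun x j => hind _ x (Nat.lt_succ_self _) j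
  -- the telescoping
  set A : P → ℕ → ℝ := fun x j => if j = 0 then 1 else ∑ z, W x z * B z j with hA
  have hAS : ∀ x ∈ X, A x a ≤ S x a := by
    intro x hx
    cases a with
    | zero => simpa [hA] using hS0 x hx
    | succ j =>
      simp only [hA, Nat.succ_ne_zero, if_false]
      refine le_trans (Finset.sum_le_sum ?_) (hSstep x j)
      intro z _
      exact mul_le_mul_of_nonneg_left (hB z j).2 (h0 x z)
  have hlevel : ∀ j, ∑ x ∈ X, (A x j - A x (j + 1)) ≤ ∑ y, (1 - ∑ x, W x y) := by
    intro j
    have e1 : ∑ x ∈ X, (A x j - A x (j + 1)) = ∑ x, (B x (j + 1) - ∑ z, W x z * B z (j + 1)) := by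
      rw [← Finset.sum_subset (Finset.subset_univ X)]
      · apply Finset.sum_congr rfl
        intro x hx
        cases j with
        | zero => simp [hA, hB1 x hx]
        | succ j => simp [hA, hB2 x hx]
      · intro x _ hx
        rw [← hB3 x hx]; simp
    rw [e1, Finset.sum_sub_distrib, Finset.sum_comm, ← Finset.sum_sub_distrib]
    apply Finset.sum_le_sum
    intro y _
    rw [← Finset.sum_mul]
    nlinarith [(hB y j).1, hin y]
  have htel : ∀ k : ℕ, ∑ x ∈ X, (A x 0 - A x k) ≤ k * ∑ y, (1 - ∑ x, W x y) := by
    intro k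
    induction k with
    | zero => simp
    | succ k ih =>
      have := hlevel k
      have e : ∑ x ∈ X, (A x 0 - A x (k + 1)) =
          ∑ x ∈ X, (A x 0 - A x k) + ∑ x ∈ X, (A x k - A x (k + 1)) := by
        rw [← Finset.sum_add_distrib]; apply Finset.sum_congr rfl; intros; ring
      rw [e]; push_cast; linarith
  have h1 := htel a
  rw [Finset.sum_sub_distrib] at h1
  have h2 : ∑ x ∈ X, A x 0 = X.card := by simp [hA]
  have h3 := Finset.sum_le_sum hAS
  linarith

/-- Powers of `W` are bounded. -/
theorem pow_bound {P : Type*} [Fintype P] [PartialOrder P] (r : P → ℕ)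
    (W : Matrix P P ℝ) (h0 : ∀ x y, 0 ≤ W x y) (hr : ∀ x y, W x y ≠ 0 → r y = r x + 1)
    (hle : ∀ x y, W x y ≠ 0 → x ≤ y)
    (hout : ∀ x, ∑ y, W x y ≤ 1) (q : ℝ) (hq : 0 ≤ q) (hW : ∀ x y, W x y ≤ q)
    (hcov : ∀ x y, x ≤ y → (Finset.univ.filter (fun z => W x z ≠ 0 ∧ z ≤ y)).card + r x ≤ r y)
    (a k : ℕ) (hk : a ≤ k) (x y : P) :
    (W ^ k) x y ≤ a.factorial * q ^ a ∧ ((W ^ k) x y ≠ 0 → x ≤ y) := by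
  have hpow : ∀ k x y, 0 ≤ (W ^ k) x y ∧ ((W ^ k) x y ≠ 0 → x ≤ y ∧ r y = r x + k) := by
    intro k
    induction k with
    | zero =>
      intro x y; rw [pow_zero, Matrix.one_apply]
      split_ifs with h
      · subst h; simp
      · simp
    | succ k ih =>
      intro x y
      rw [pow_succ, Matrix.mul_apply]
      refine ⟨Finset.sum_nonneg fun z _ => mul_nonneg (ih _ _).1 (h0 _ _), ?_⟩
      intro h
      obtain ⟨z, -, hz⟩ := Finset.exists_ne_zero_of_sum_ne_zero h
      have h1 := (ih x z).2 (left_ne_zero_of_mul hz)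
      have h2 := right_ne_zero_of_mul hz
      have h3 := hr _ _ h2
      exact ⟨h1.1.trans (hle _ _ h2), by omega⟩
  have hrow : ∀ k x, ∑ y, (W ^ k) x y ≤ 1 := by
    intro k
    induction k with
    | zero => intro x; simp [Matrix.one_apply]
    | succ k ih =>
      intro x
      simp only [pow_succ', Matrix.mul_apply]
      rw [Finset.sum_comm]
      refine le_trans (Finset.sum_le_sum ?_) (hout x)
      intro z _
      rw [← Finset.mul_sum]
      nlinarith [h0 x z, ih z]
  have hfac : ∀ a x y, (W ^ a) x y ≤ a.factorial * q ^ a := by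
    intro a
    induction a with
    | zero => intro x y; rw [pow_zero, Matrix.one_apply]; split_ifs <;> simp
    | succ a ih =>
      intro x y
      by_cases hne : (W ^ (a + 1)) x y = 0
      · rw [hne]; positivity
      obtain ⟨hxy, hrxy⟩ := (hpow _ x y).2 hne
      have hc := hcov x y hxy
      have hc' : ((Finset.univ.filter (fun z => W x z ≠ 0 ∧ z ≤ y)).card : ℝ) ≤ a + 1 := by
        have : (Finset.univ.filter (fun z => W x z ≠ 0 ∧ z ≤ y)).card ≤ a + 1 := by omega
        exact_mod_cast this
      rw [pow_succ', Matrix.mul_apply]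
      have e : ∑ z, W x z * (W ^ a) z y =
          ∑ z ∈ Finset.univ.filter (fun z => W x z ≠ 0 ∧ z ≤ y), W x z * (W ^ a) z y := by
        symm
        apply Finset.sum_subset (Finset.subset_univ _)
        intro z _ hz
        by_contra h
        apply hz
        simp only [Finset.mem_filter, Finset.mem_univ, true_and]
        exact ⟨left_ne_zero_of_mul h, ((hpow _ _ _).2 (right_ne_zero_of_mul h)).1⟩
      rw [e]
      have : ∀ z ∈ Finset.univ.filter (fun z => W x z ≠ 0 ∧ z ≤ y),
          W x z * (W ^ a) z y ≤ q * (a.factorial * q ^ a) := fun z _ =>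
        mul_le_mul (hW x z) (ih z y) (hpow _ _ _).1 hq
      refine (Finset.sum_le_card_nsmul _ _ _ this).trans ?_
      rw [nsmul_eq_mul, Nat.factorial_succ]
      push_cast
      have h4 : (0:ℝ) ≤ q * (a.factorial * q ^ a) := by positivity
      calc _ ≤ ((a:ℝ) + 1) * (q * (a.factorial * q ^ a)) := mul_le_mul_of_nonneg_right hc' h4
        _ = _ := by ring
  refine ⟨?_, fun h => ((hpow _ _ _).2 h).1⟩
  obtain ⟨c, rfl⟩ := Nat.exists_eq_add_of_le' hk
  rw [pow_add, Matrix.mul_apply]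
  have h4 : (0:ℝ) ≤ a.factorial * q ^ a := by positivity
  calc _ ≤ ∑ z, (W ^ c) x z * (a.factorial * q ^ a) :=
        Finset.sum_le_sum fun z _ => mul_le_mul_of_nonneg_left (hfac a z y) (hpow _ _ _).1
    _ = (∑ z, (W ^ c) x z) * (a.factorial * q ^ a) := by rw [Finset.sum_mul]
    _ ≤ _ := by nlinarith [hrow c x]

/-- symmetric unimodality about `c/2` -/
def SymUni (f : ℤ → ℕ) (c : ℤ) : Prop := ∀ i j : ℤ, |2 * i - c| ≤ |2 * j - c| → f j ≤ f i

theorem SymUni.conv {f : ℤ → ℕ} {c : ℤ} (h : SymUni f c) (p : ℕ) :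
    SymUni (fun i => ∑ t ∈ Finset.range (p + 1), f (i - t)) (c + p) := by
  set g : ℤ → ℕ := fun i => ∑ t ∈ Finset.range (p + 1), f (i - t) with hg
  have hsymf : ∀ i, f (c - i) = f i := by
    intro i
    apply le_antisymm
    · apply h
      rw [show 2 * (c - i) - c = -(2 * i - c) by ring, abs_neg]
    · apply h
      rw [show 2 * (c - i) - c = -(2 * i - c) by ring, abs_neg]
  have hsym : ∀ i, g (c + p - i) = g i := by
    intro i
    simp only [hg]
    rw [← Finset.sum_range_reflect]
    apply Finset.sum_congr rfl
    intro t ht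
    rw [Finset.mem_range] at ht
    rw [← hsymf]
    congr 1
    have : p + 1 - 1 - t = p - t := by omega
    rw [this]
    push_cast [show t ≤ p by omega]
    ring
  have hstep : ∀ i : ℤ, 2 * (i + 1) ≤ c + p + 1 → g i ≤ g (i + 1) := by
    intro i hi
    have e1 : g (i + 1) = f (i + 1) + ∑ t ∈ Finset.range p, f (i - t) := by
      simp only [hg]
      rw [Finset.sum_range_succ', add_comm]
      congr 1
      · simp
      · apply Finset.sum_congr rfl
        intro t _
        congr 1
        push_cast; ring
    have e2 : g i = (∑ t ∈ Finset.range p, f (i - t)) + f (i - p) := by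
      simp only [hg]
      rw [Finset.sum_range_succ]
    have : f (i - p) ≤ f (i + 1) := by
      apply h
      rw [← sq_le_sq]
      nlinarith
    omega
  have hmono : ∀ (k : ℕ) (i : ℤ), 2 * (i + k) ≤ c + p + 1 → g i ≤ g (i + k) := by
    intro k
    induction k with
    | zero => intro i _; simp
    | succ k ih =>
      intro i hi
      push_cast at hi ⊢
      refine (ih i (by omega)).trans ?_
      rw [← add_assoc]
      exact hstep _ (by omega)
  have hlow : ∀ i j : ℤ, j ≤ i → 2 * i ≤ c + p → g j ≤ g i := by
    intro i j hji hi
    have := hmono (i - j).toNat j (by omega)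
    rwa [show j + ((i - j).toNat : ℤ) = i by omega] at this
  intro i j hij
  show g j ≤ g i
  rcases le_total (2 * i) (c + p) with h1 | h1 <;> rcases le_total (2 * j) (c + p) with h2 | h2
  · rw [abs_of_nonpos (by omega), abs_of_nonpos (by omega)] at hij
    exact hlow _ _ (by omega) h1
  · rw [abs_of_nonpos (by omega), abs_of_nonneg (by omega)] at hij
    rw [← hsym j]
    exact hlow _ _ (by omega) h1
  · rw [abs_of_nonneg (by omega), abs_of_nonpos (by omega)] at hij
    rw [← hsym i]
    exact hlow _ _ (by omega) (by omega)
  · rw [abs_of_nonneg (by omega), abs_of_nonneg (by omega)] at hij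
    rw [← hsym j, ← hsym i]
    exact hlow _ _ (by omega) (by omega)

theorem level_symUni (p D : ℕ) :
    SymUni (fun k : ℤ =>
      (Finset.univ.filter (fun x : Fin D → Fin (p + 1) => (rank x : ℤ) = k)).card) ((p : ℤ) * D) := by
  induction D with
  | zero =>
    intro i j hij
    simp only [rank, Finset.univ_eq_empty, Finset.sum_empty]
    by_cases hj : j = 0
    · have : i = 0 := by
        subst hj
        simp only [mul_zero, Nat.cast_zero, sub_zero, abs_zero] at hij
        have := abs_nonneg (2 * i)
        have := abs_eq_zero.mp (le_antisymm hij this)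
        omega
      simp [hj, this]
    · have : ¬ ((0 : ℕ) : ℤ) = j := by push_cast; exact fun h => hj h.symm
      simp [Ne.symm hj]
  | succ D ih =>
    have := ih.conv p
    have e : (p : ℤ) * ((D + 1 : ℕ) : ℤ) = p * D + p := by push_cast; ring
    rw [e]
    convert this using 2 with k
    rw [← Fin.sum_univ_eq_sum_range (fun t => (Finset.univ.filter
      (fun x : Fin D → Fin (p + 1) => (rank x : ℤ) = k - (t : ℕ))).card) (p + 1)]
    simp only [Finset.card_filter]
    rw [← (Fin.consEquiv (fun _ : Fin (D + 1) => Fin (p + 1))).sum_comp, Fintype.sum_prod_type]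
    apply Finset.sum_congr rfl
    intro t _
    apply Finset.sum_congr rfl
    intro x _
    have : (rank (Fin.cons t x : Fin (D + 1) → Fin (p + 1)) : ℤ) = t + rank x := by
      simp [rank, Fin.sum_univ_succ]
    have h2 : ((rank (Fin.cons t x : Fin (D + 1) → Fin (p + 1)) : ℤ) = k) ↔
        ((rank x : ℤ) = k - (t : ℕ)) := by rw [this]; constructor <;> intro h <;> omega
    exact if_congr h2 rfl rfl

theorem level_le (p D k : ℕ) :
    (Finset.univ.filter (fun x : Fin D → Fin (p + 1) => rank x = k)).card ≤
      middleLayerCard (p + 1) D := by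
  have h := level_symUni p D ((p * D / 2 : ℕ) : ℤ) (k : ℤ) (by
    have e : (p : ℤ) * D = ((p * D : ℕ) : ℤ) := by push_cast; ring
    rw [e]
    generalize p * D = m
    rw [abs_le, le_abs, ]
    rcases le_total (2 * (k : ℤ) - m) 0 with h | h
    · rw [abs_of_nonpos h]; omega
    · rw [abs_of_nonneg h]; omega)
  simp only [Nat.cast_inj] at h
  exact h

/-- `y` is obtained from `x` by increasing coordinate `i` by one. -/
def Edge {n D : ℕ} (i : Fin D) (x y : Fin D → Fin n) : Prop :=
  (y i : ℕ) = x i + 1 ∧ ∀ j, j ≠ i → y j = x j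

noncomputable def upW {p D : ℕ} (x : Fin D → Fin (p + 1)) : ℝ :=
  ∑ i, ((x i : ℝ) + 1) * (p - (x i : ℝ))

noncomputable def dnW {p D : ℕ} (x : Fin D → Fin (p + 1)) : ℝ :=
  ∑ i, (x i : ℝ) * (p + 1 - (x i : ℝ))

noncomputable def flowW (p D : ℕ) : Matrix (Fin D → Fin (p + 1)) (Fin D → Fin (p + 1)) ℝ :=
  fun x y => ∑ i, if Edge i x y then ((x i : ℝ) + 1) * (p - (x i : ℝ)) / max (upW x) (dnW y) else 0

theorem coord_le {p D : ℕ} (x : Fin D → Fin (p + 1)) (i : Fin D) : ((x i : ℕ) : ℝ) ≤ p := by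
  have := (x i).is_lt
  exact_mod_cast (by omega : (x i : ℕ) ≤ p)

theorem Edge.sum_eq {p D : ℕ} {i : Fin D} {x y : Fin D → Fin (p + 1)} (h : Edge i x y)
    (F : ℕ → ℝ) : ∑ j, F (y j) = ∑ j, F (x j) + (F (x i + 1) - F (x i)) := by
  rw [← Finset.add_sum_erase _ _ (Finset.mem_univ i),
    ← Finset.add_sum_erase _ (fun j => F (x j)) (Finset.mem_univ i), h.1]
  have : ∑ j ∈ Finset.univ.erase i, F (y j) = ∑ j ∈ Finset.univ.erase i, F (x j) := by
    apply Finset.sum_congr rfl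
    intro j hj
    rw [h.2 j (Finset.ne_of_mem_erase hj)]
  rw [this]; ring

theorem Edge.rank_eq {p D : ℕ} {i : Fin D} {x y : Fin D → Fin (p + 1)} (h : Edge i x y) :
    rank y = rank x + 1 := by
  have := h.sum_eq (fun k => (k : ℝ))
  unfold rank
  push_cast at this
  have h2 : ((∑ j, (y j : ℕ) : ℕ) : ℝ) = ((∑ j, (x j : ℕ) + 1 : ℕ) : ℝ) := by
    push_cast; rw [this]; ring
  exact_mod_cast h2

theorem Edge.le {p D : ℕ} {i : Fin D} {x y : Fin D → Fin (p + 1)} (h : Edge i x y) : x ≤ y := by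
  intro j
  by_cases hj : j = i
  · subst hj
    rw [Fin.le_def, h.1]; omega
  · rw [h.2 j hj]

theorem rank_cast {p D : ℕ} (x : Fin D → Fin (p + 1)) : (rank x : ℝ) = ∑ i, (x i : ℝ) := by
  simp [rank]

theorem up_sub_dn {p D : ℕ} (x : Fin D → Fin (p + 1)) :
    upW x - dnW x = p * D - 2 * rank x := by
  rw [rank_cast, upW, dnW, ← Finset.sum_sub_distrib, Finset.mul_sum]
  have : (p : ℝ) * D = ∑ _i : Fin D, (p : ℝ) := by simp [mul_comm]
  rw [this, ← Finset.sum_sub_distrib]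
  apply Finset.sum_congr rfl
  intros; ring

theorem Edge.dn_sub_up {p D : ℕ} {i : Fin D} {x y : Fin D → Fin (p + 1)} (h : Edge i x y) :
    dnW y - upW x = 2 * rank x - p * D + p - 2 * (x i : ℝ) := by
  have h1 : dnW y = _ := h.sum_eq (fun k => (k : ℝ) * (p + 1 - (k : ℝ)))
  have h2 := up_sub_dn x
  have h3 : dnW x = ∑ j, (fun k : ℕ => (k : ℝ) * (p + 1 - (k : ℝ))) (x j : ℕ) := rfl
  rw [← h3] at h1
  push_cast at h1
  rw [h1]; linarith

theorem le_up {p D : ℕ} (x : Fin D → Fin (p + 1)) : (p : ℝ) * D - rank x ≤ upW x := by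
  rw [rank_cast, upW]
  have : (p : ℝ) * D = ∑ _i : Fin D, (p : ℝ) := by simp [mul_comm]
  rw [this, ← Finset.sum_sub_distrib]
  apply Finset.sum_le_sum
  intro i _
  have := coord_le x i
  have : (0 : ℝ) ≤ (x i : ℕ) := Nat.cast_nonneg _
  nlinarith

theorem le_dn {p D : ℕ} (x : Fin D → Fin (p + 1)) : (rank x : ℝ) ≤ dnW x := by
  rw [rank_cast, dnW]
  apply Finset.sum_le_sum
  intro i _
  have := coord_le x i
  have : (0 : ℝ) ≤ (x i : ℕ) := Nat.cast_nonneg _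
  nlinarith

theorem rank_le_top {p D : ℕ} (x : Fin D → Fin (p + 1)) : rank x ≤ p * D := by
  unfold rank
  have : ∑ i, (x i : ℕ) ≤ ∑ _i : Fin D, p :=
    Finset.sum_le_sum fun i _ => by have := (x i).is_lt; omega
  simpa [mul_comm] using this

theorem Edge.up_pos {p D : ℕ} {i : Fin D} {x y : Fin D → Fin (p + 1)} (h : Edge i x y) :
    0 < upW x := by
  have h1 := rank_le_top y
  rw [h.rank_eq] at h1
  have h2 : (rank x : ℝ) + 1 ≤ p * D := by exact_mod_cast h1
  linarith [le_up x]

theorem Edge.dn_pos {p D : ℕ} {i : Fin D} {x y : Fin D → Fin (p + 1)} (h : Edge i x y) :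
    0 < dnW y := by
  have h1 := le_dn y
  rw [h.rank_eq] at h1
  push_cast at h1
  have : (0 : ℝ) ≤ rank x := Nat.cast_nonneg _
  linarith

theorem Edge.max_ge {p D : ℕ} {i : Fin D} {x y : Fin D → Fin (p + 1)} (h : Edge i x y) :
    (p : ℝ) * D / 2 ≤ max (upW x) (dnW y) := by
  have h1 := le_dn y
  rw [h.rank_eq] at h1
  push_cast at h1
  have h2 := le_up x
  have h3 := le_max_left (upW x) (dnW y)
  have h4 := le_max_right (upW x) (dnW y)
  linarith

theorem Edge.unique {p D : ℕ} {i j : Fin D} {x y : Fin D → Fin (p + 1)} (h : Edge i x y)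
    (h' : Edge j x y) : j = i := by
  by_contra hne
  have h1 := h.2 j hne
  have h2 := h'.1
  rw [h1] at h2
  omega

theorem Edge.flow {p D : ℕ} {i : Fin D} {x y : Fin D → Fin (p + 1)} (h : Edge i x y) :
    flowW p D x y = ((x i : ℝ) + 1) * (p - (x i : ℝ)) / max (upW x) (dnW y) := by
  unfold flowW
  rw [Finset.sum_eq_single i]
  · rw [if_pos h]
  · intro j _ hj
    rw [if_neg]
    intro h'
    exact hj (h.unique h')
  · simp

theorem exists_edge {p D : ℕ} {x y : Fin D → Fin (p + 1)} (h : flowW p D x y ≠ 0) :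
    ∃ i, Edge i x y := by
  obtain ⟨i, -, hi⟩ := Finset.exists_ne_zero_of_sum_ne_zero h
  refine ⟨i, ?_⟩
  by_contra h'
  exact hi (if_neg h')

theorem coef_nonneg {p D : ℕ} (x : Fin D → Fin (p + 1)) (i : Fin D) :
    (0 : ℝ) ≤ ((x i : ℝ) + 1) * (p - (x i : ℝ)) :=
  mul_nonneg (by positivity) (by linarith [coord_le x i])

theorem flow_nonneg {p D : ℕ} (x y : Fin D → Fin (p + 1)) : 0 ≤ flowW p D x y := by
  by_contra h
  obtain ⟨i, hi⟩ := exists_edge (fun h' => h h'.ge)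
  rw [hi.flow] at h
  exact h (div_nonneg (coef_nonneg x i) (le_max_of_le_left hi.up_pos.le))

theorem flow_le {p D : ℕ} (hD : 1 ≤ D) (x y : Fin D → Fin (p + 1)) :
    flowW p D x y ≤ ((p + 1 : ℕ) : ℝ) / D := by
  by_cases h : flowW p D x y = 0
  · rw [h]; positivity
  obtain ⟨i, hi⟩ := exists_edge h
  rw [hi.flow]
  have hpos : 0 < max (upW x) (dnW y) := lt_max_of_lt_left hi.up_pos
  have hD' : (0 : ℝ) < D := by exact_mod_cast hD
  rw [div_le_div_iff₀ hpos hD']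
  have hp : (1 : ℝ) ≤ p := by
    have := (y i).is_lt
    rw [hi.1] at this
    exact_mod_cast (by omega : 1 ≤ p)
  have hm := hi.max_ge
  have h1 : ((x i : ℝ) + 1) * (p - (x i : ℝ)) ≤ (p + 1) ^ 2 / 4 := by
    nlinarith [sq_nonneg (((x i : ℕ) : ℝ) + 1 - (p - ((x i : ℕ) : ℝ)))]
  push_cast
  calc _ ≤ ((p : ℝ) + 1) ^ 2 / 4 * D := mul_le_mul_of_nonneg_right h1 hD'.le
    _ ≤ (p + 1) * (p * D / 2) := by
        have : 0 ≤ ((p : ℝ) + 1) * D * (p - 1) := by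
          apply mul_nonneg (by positivity); linarith
        nlinarith
    _ ≤ _ := mul_le_mul_of_nonneg_left hm (by positivity)

theorem sum_edge_up {p D : ℕ} (i : Fin D) (x : Fin D → Fin (p + 1)) (c : ℝ) :
    (∑ y, if Edge i x y then ((x i : ℝ) + 1) * (p - (x i : ℝ)) * c else 0) =
      ((x i : ℝ) + 1) * (p - (x i : ℝ)) * c := by
  by_cases hx : (x i : ℕ) + 1 < p + 1
  · rw [Finset.sum_eq_single (Function.update x i ⟨x i + 1, hx⟩)]
    · rw [if_pos]
      refine ⟨by simp, fun j hj => by simp [hj]⟩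
    · intro y _ hy
      rw [if_neg]
      intro h
      apply hy
      funext j
      by_cases hj : j = i
      · subst hj
        apply Fin.ext
        simp [h.1]
      · simp [hj, h.2 j hj]
    · simp
  · have h1 : (x i : ℕ) = p := by have := (x i).is_lt; omega
    simp [h1]

theorem sum_edge_dn {p D : ℕ} (i : Fin D) (y : Fin D → Fin (p + 1)) (c : ℝ) :
    (∑ x, if Edge i x y then (y i : ℝ) * (p + 1 - (y i : ℝ)) * c else 0) =
      (y i : ℝ) * (p + 1 - (y i : ℝ)) * c := by
  by_cases hy : 1 ≤ (y i : ℕ)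
  · have hlt : (y i : ℕ) - 1 < p + 1 := by have := (y i).is_lt; omega
    rw [Finset.sum_eq_single (Function.update y i ⟨y i - 1, hlt⟩)]
    · rw [if_pos]
      refine ⟨by simp; omega, fun j hj => by simp [hj]⟩
    · intro x _ hx
      rw [if_neg]
      intro h
      apply hx
      funext j
      by_cases hj : j = i
      · subst hj
        apply Fin.ext
        simp [h.1]
      · simp [hj, h.2 j hj]
    · simp
  · have h1 : (y i : ℕ) = 0 := by omega
    simp [h1]

theorem Edge.coef {p D : ℕ} {i : Fin D} {x y : Fin D → Fin (p + 1)} (h : Edge i x y) :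
    ((x i : ℝ) + 1) * (p - (x i : ℝ)) = (y i : ℝ) * (p + 1 - (y i : ℝ)) := by
  rw [h.1]; push_cast; ring

theorem flow_out_eq {p D : ℕ} (x : Fin D → Fin (p + 1)) (c : ℝ) :
    (∑ y, ∑ i, if Edge i x y then ((x i : ℝ) + 1) * (p - (x i : ℝ)) * c else 0) = upW x * c := by
  rw [Finset.sum_comm, upW, Finset.sum_mul]
  exact Finset.sum_congr rfl fun i _ => sum_edge_up i x c

theorem flow_in_eq {p D : ℕ} (y : Fin D → Fin (p + 1)) (c : ℝ) :
    (∑ x, ∑ i, if Edge i x y then (y i : ℝ) * (p + 1 - (y i : ℝ)) * c else 0) = dnW y * c := by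
  rw [Finset.sum_comm, dnW, Finset.sum_mul]
  exact Finset.sum_congr rfl fun i _ => sum_edge_dn i y c

theorem flow_out {p D : ℕ} (x : Fin D → Fin (p + 1)) : ∑ y, flowW p D x y ≤ 1 := by
  have h : ∑ y, flowW p D x y ≤ upW x * (upW x)⁻¹ := by
    rw [← flow_out_eq]
    unfold flowW
    apply Finset.sum_le_sum; intro y _
    apply Finset.sum_le_sum; intro i _
    split_ifs with hi
    · rw [div_eq_mul_inv]
      apply mul_le_mul_of_nonneg_left _ (coef_nonneg x i)
      exact inv_anti₀ hi.up_pos (le_max_left _ _)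
    · exact le_rfl
  exact h.trans (mul_inv_le_one)

theorem flow_in {p D : ℕ} (y : Fin D → Fin (p + 1)) : ∑ x, flowW p D x y ≤ 1 := by
  have h : ∑ x, flowW p D x y ≤ dnW y * (dnW y)⁻¹ := by
    rw [← flow_in_eq]
    unfold flowW
    apply Finset.sum_le_sum; intro x _
    apply Finset.sum_le_sum; intro i _
    split_ifs with hi
    · rw [div_eq_mul_inv, ← hi.coef]
      apply mul_le_mul_of_nonneg_left _ (coef_nonneg x i)
      exact inv_anti₀ hi.dn_pos (le_max_right _ _)
    · exact le_rfl
  exact h.trans (mul_inv_le_one)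

/-- Loss at rank `k`. -/
noncomputable def loss (p D k : ℕ) : ℝ :=
  if p * D < 2 * k + p ∧ 2 * k < p * D + p then 2 / D else 0

theorem loss_nonneg (p D k : ℕ) : 0 ≤ loss p D k := by
  unfold loss; split_ifs <;> positivity

theorem flow_out_ge {p D : ℕ} (hD : 1 ≤ D) (x : Fin D → Fin (p + 1)) (hx : rank x < p * D / 2) :
    1 - loss p D (rank x) ≤ ∑ y, flowW p D x y := by
  have hD' : (0 : ℝ) < D := by exact_mod_cast hD
  have hlt : rank x < p * D := by omega
  have hup : 0 < upW x := by
    have : (rank x : ℝ) < p * D := by exact_mod_cast hlt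
    linarith [le_up x]
  have h : upW x * ((upW x)⁻¹ * (1 - loss p D (rank x))) ≤ ∑ y, flowW p D x y := by
    rw [← flow_out_eq]
    unfold flowW
    apply Finset.sum_le_sum; intro y _
    apply Finset.sum_le_sum; intro i _
    split_ifs with hi
    · rw [div_eq_mul_inv]
      apply mul_le_mul_of_nonneg_left _ (coef_nonneg x i)
      have hpos : 0 < max (upW x) (dnW y) := lt_max_of_lt_left hi.up_pos
      rw [inv_mul_le_iff₀ hup, ← div_eq_mul_inv, le_div_iff₀ hpos]
      have hm := hi.max_ge
      have hl := loss_nonneg p D (rank x)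
      have hd := hi.dn_sub_up
      have hxi : (0 : ℝ) ≤ (x i : ℕ) := Nat.cast_nonneg _
      rcases le_total (dnW y) (upW x) with hc | hc
      · rw [max_eq_left hc]; nlinarith
      · rw [max_eq_right hc] at hm ⊢
        by_cases hcond : p * D < 2 * rank x + p
        · have : loss p D (rank x) = 2 / D := if_pos ⟨hcond, by omega⟩
          rw [this]
          have h5 : (p : ℝ) ≤ 2 / D * dnW y := by
            calc (p : ℝ) = 2 / D * (p * D / 2) := by field_simp
              _ ≤ _ := mul_le_mul_of_nonneg_left hm (by positivity)
          have h6 : (rank x : ℝ) * 2 ≤ p * D := by exact_mod_cast (by omega : rank x * 2 ≤ p * D)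
          linarith
        · have h6 : (rank x : ℝ) * 2 + p ≤ p * D := by
            exact_mod_cast (by omega : rank x * 2 + p ≤ p * D)
          nlinarith [hi.dn_pos]
    · exact le_rfl
  rwa [mul_inv_cancel_left₀ hup.ne'] at h

theorem flow_in_ge {p D : ℕ} (hD : 1 ≤ D) (y : Fin D → Fin (p + 1)) (hy : p * D / 2 < rank y) :
    1 - loss p D (rank y) ≤ ∑ x, flowW p D x y := by
  have hD' : (0 : ℝ) < D := by exact_mod_cast hD
  have hup : 0 < dnW y := by
    have : (0 : ℝ) < rank y := by exact_mod_cast (by omega : 0 < rank y)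
    linarith [le_dn y]
  have h : dnW y * ((dnW y)⁻¹ * (1 - loss p D (rank y))) ≤ ∑ x, flowW p D x y := by
    rw [← flow_in_eq]
    unfold flowW
    apply Finset.sum_le_sum; intro x _
    apply Finset.sum_le_sum; intro i _
    split_ifs with hi
    · rw [div_eq_mul_inv, ← hi.coef]
      apply mul_le_mul_of_nonneg_left _ (coef_nonneg x i)
      have hpos : 0 < max (upW x) (dnW y) := lt_max_of_lt_left hi.up_pos
      rw [inv_mul_le_iff₀ hup, ← div_eq_mul_inv, le_div_iff₀ hpos]
      have hm := hi.max_ge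
      have hl := loss_nonneg p D (rank y)
      have hd := hi.dn_sub_up
      have hr : (rank y : ℝ) = rank x + 1 := by exact_mod_cast hi.rank_eq
      have hxi : (x i : ℝ) + 1 ≤ p := by
        have := coord_le y i
        rw [hi.1] at this
        exact_mod_cast this
      rcases le_total (upW x) (dnW y) with hc | hc
      · rw [max_eq_right hc]; nlinarith
      · rw [max_eq_left hc] at hm ⊢
        by_cases hcond : 2 * rank y < p * D + p
        · have : loss p D (rank y) = 2 / D := if_pos ⟨by omega, hcond⟩
          rw [this]
          have h5 : (p : ℝ) ≤ 2 / D * upW x := by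
            calc (p : ℝ) = 2 / D * (p * D / 2) := by field_simp
              _ ≤ _ := mul_le_mul_of_nonneg_left hm (by positivity)
          have h6 : (p : ℝ) * D ≤ rank y * 2 := by exact_mod_cast (by omega : p * D ≤ rank y * 2)
          linarith
        · have h6 : (p : ℝ) * D + p ≤ rank y * 2 := by
            exact_mod_cast (by omega : p * D + p ≤ rank y * 2)
          nlinarith [hi.up_pos]
    · exact le_rfl
  rwa [mul_inv_cancel_left₀ hup.ne'] at h

theorem total_mass {p D : ℕ} (hD : 1 ≤ D) :
    ∑ y, (1 - ∑ x, flowW p D x y) ≤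
      (1 + 3 * ((p + 1 : ℕ) : ℝ) / D) * middleLayerCard (p + 1) D := by
  have hD' : (0 : ℝ) < D := by exact_mod_cast hD
  set m := p * D / 2 with hm
  have e1 : ∑ y, ∑ x, flowW p D x y =
      ∑ x, ((if rank x < m then ∑ y, flowW p D x y else 0) +
        (if m < rank x then ∑ y, flowW p D y x else 0)) := by
    rw [Finset.sum_add_distrib]
    have a1 : ∑ x : Fin D → Fin (p + 1), (if rank x < m then ∑ y, flowW p D x y else 0) =
        ∑ y, ∑ x, if rank x < m then flowW p D x y else 0 := by
      rw [Finset.sum_comm]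
      apply Finset.sum_congr rfl; intro x _
      split_ifs <;> simp
    have a2 : ∑ y : Fin D → Fin (p + 1), (if m < rank y then ∑ x, flowW p D x y else 0) =
        ∑ y, ∑ x, if m < rank y then flowW p D x y else 0 := by
      apply Finset.sum_congr rfl; intro x _
      split_ifs <;> simp
    rw [a1, a2, ← Finset.sum_add_distrib]
    apply Finset.sum_congr rfl; intro y _
    rw [← Finset.sum_add_distrib]
    apply Finset.sum_congr rfl; intro x _
    by_cases h : flowW p D x y = 0
    · simp [h]
    · obtain ⟨i, hi⟩ := exists_edge h
      have := hi.rank_eq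
      by_cases hx : rank x < m
      · rw [if_pos hx, if_neg (by omega), add_zero]
      · rw [if_neg hx, if_pos (by omega), zero_add]
  have e2 : ∑ y, (1 - ∑ x, flowW p D x y) ≤
      ∑ x : Fin D → Fin (p + 1), ((if rank x = m then (1 : ℝ) else 0) + loss p D (rank x)) := by
    rw [Finset.sum_sub_distrib, e1, ← Finset.sum_sub_distrib]
    apply Finset.sum_le_sum
    intro x _
    rcases lt_trichotomy (rank x) m with h | h | h
    · rw [if_pos h, if_neg (by omega), if_neg (by omega)]
      linarith [flow_out_ge hD x h]
    · rw [if_neg (by omega), if_neg (by omega), if_pos h]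
      linarith [loss_nonneg p D (rank x)]
    · rw [if_neg (by omega), if_pos h, if_neg (by omega)]
      linarith [flow_in_ge hD x h]
  refine e2.trans ?_
  rw [Finset.sum_add_distrib]
  have e3 : ∑ x : Fin D → Fin (p + 1), (if rank x = m then (1 : ℝ) else 0) =
      middleLayerCard (p + 1) D := by
    rw [Finset.sum_boole]; rfl
  have e4 : ∑ x : Fin D → Fin (p + 1), loss p D (rank x) ≤
      2 / D * ((p + 1 : ℕ) * middleLayerCard (p + 1) D) := by
    unfold loss
    rw [← Finset.sum_filter, Finset.sum_const, nsmul_eq_mul, mul_comm]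
    apply mul_le_mul_of_nonneg_left _ (by positivity)
    have hc : (Finset.univ.filter (fun x : Fin D → Fin (p + 1) =>
        p * D < 2 * rank x + p ∧ 2 * rank x < p * D + p)).card ≤
        middleLayerCard (p + 1) D *
          (Finset.Ico ((p * D - p) / 2) ((p * D - p) / 2 + (p + 1))).card := by
      apply Finset.card_le_mul_card_image_of_maps_to (f := rank)
      · intro x hx
        simp only [Finset.mem_univ, true_and, Finset.mem_filter] at hx
        simp only [Finset.mem_Ico]
        generalize p * D = M at *
        omega
      · intro k _
        refine le_trans (Finset.card_le_card ?_) (level_le p D k)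
        intro x hx
        simp only [Finset.mem_filter, Finset.mem_univ, true_and] at hx ⊢
        exact hx.2
    rw [Nat.card_Ico, Nat.add_sub_cancel_left, mul_comm (middleLayerCard _ _)] at hc
    exact_mod_cast hc
  rw [e3]
  refine (add_le_add_right e4 _).trans ?_
  have h5 : (0 : ℝ) ≤ ((p + 1 : ℕ) : ℝ) / D * middleLayerCard (p + 1) D := by positivity
  have : (1 + 3 * ((p + 1 : ℕ) : ℝ) / D) * middleLayerCard (p + 1) D =
    middleLayerCard (p + 1) D + 2 / D * ((p + 1 : ℕ) * middleLayerCard (p + 1) D) +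
      ((p + 1 : ℕ) : ℝ) / D * middleLayerCard (p + 1) D := by
    field_simp; ring
  rw [this]; linarith

theorem flow_cov {p D : ℕ} (x y : Fin D → Fin (p + 1)) (hxy : x ≤ y) :
    (Finset.univ.filter (fun z => flowW p D x z ≠ 0 ∧ z ≤ y)).card + rank x ≤ rank y := by
  have h1 : Finset.univ.filter (fun z => flowW p D x z ≠ 0 ∧ z ≤ y) ⊆
      (Finset.univ.filter (fun i => x i < y i)).image (fun i =>
        if h : (x i : ℕ) + 1 < p + 1 then Function.update x i ⟨x i + 1, h⟩ else x) := by
    intro z hz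
    simp only [Finset.mem_filter, Finset.mem_univ, true_and] at hz
    obtain ⟨i, hi⟩ := exists_edge hz.1
    have hlt : (x i : ℕ) + 1 < p + 1 := by rw [← hi.1]; exact (z i).is_lt
    rw [Finset.mem_image]
    refine ⟨i, ?_, ?_⟩
    · simp only [Finset.mem_filter, Finset.mem_univ, true_and]
      have h2 := hz.2 i
      have h3 := hi.1
      rw [Fin.le_def] at h2
      rw [Fin.lt_def]; omega
    · rw [dif_pos hlt]
      funext j
      by_cases hj : j = i
      · subst hj
        apply Fin.ext
        simp [hi.1]
      · simp [hj, hi.2 j hj]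
  have h2 := (Finset.card_le_card h1).trans Finset.card_image_le
  refine (Nat.add_le_add_right h2 _).trans ?_
  rw [Finset.card_filter, rank, rank, ← Finset.sum_add_distrib]
  apply Finset.sum_le_sum
  intro i _
  have := hxy i
  rw [Fin.le_def] at this
  split_ifs with h
  · rw [Fin.lt_def] at h; omega
  · omega

/-- Supersaturation (Theorem 3): if `X ⊆ [n]^D` has at least
`a·(1 + 3n/D)·N_{n,D} + b` elements, then `X` contains at least `(b/(a!·n^a))·D^a`
pairs `(x, y)` with `x ≼ y` and `r(y) - r(x) ≥ a`. -/
theorem stmt_15 (n D a b : ℕ) (hD : 1 ≤ D) (X : Finset (Fin D → Fin n))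
    (hX : (a : ℝ) * (1 + 3 * n / D) * middleLayerCard n D + b ≤ X.card) :
    ((b : ℝ) / (Nat.factorial a * (n : ℝ) ^ a)) * (D : ℝ) ^ a ≤
      ((X ×ˢ X).filter (fun p : (Fin D → Fin n) × (Fin D → Fin n) =>
        p.1 ≤ p.2 ∧ rank p.1 + a ≤ rank p.2)).card := by
  rcases n with _ | p
  · have hX0 : X.card = 0 := by
      rw [Finset.card_eq_zero, Finset.eq_empty_iff_forall_notMem]
      intro x
      exact (x ⟨0, hD⟩).elim0
    rw [hX0] at hX
    have hb : (b : ℝ) = 0 := by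
      apply le_antisymm _ (Nat.cast_nonneg b)
      have : (0 : ℝ) ≤ (a : ℝ) * (1 + 3 * ((0 : ℕ) : ℝ) / D) * middleLayerCard 0 D := by positivity
      push_cast at *
      linarith
    rw [hb]; simp
  · have hD' : (0 : ℝ) < D := by exact_mod_cast hD
    have h1 := abstract_chain rank (flowW p D) flow_nonneg
      (fun x y h => (exists_edge h).choose_spec.rank_eq) flow_out flow_in X a
    have h2 := total_mass (p := p) hD
    have hpb := pow_bound rank (flowW p D) flow_nonneg
      (fun x y h => (exists_edge h).choose_spec.rank_eq)
      (fun x y h => (exists_edge h).choose_spec.le) flow_out (((p + 1 : ℕ) : ℝ) / D)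
      (by positivity) (flow_le hD) flow_cov a
    set q : ℝ := ((p + 1 : ℕ) : ℝ) / D with hq
    have h3 : (b : ℝ) ≤ ((X ×ˢ X).filter (fun p : (Fin D → Fin (p + 1)) × (Fin D → Fin (p + 1)) =>
        p.1 ≤ p.2 ∧ rank p.1 + a ≤ rank p.2)).card * (a.factorial * q ^ a) := by
      have h4 : (a : ℝ) * ∑ y, (1 - ∑ x, flowW p D x y) ≤
          a * (1 + 3 * ((p + 1 : ℕ) : ℝ) / D) * middleLayerCard (p + 1) D := by
        rw [mul_assoc]
        exact mul_le_mul_of_nonneg_left h2 (Nat.cast_nonneg a)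
      refine le_trans (by linarith) (h1.trans ?_)
      rw [← Finset.sum_product', ← nsmul_eq_mul, ← Finset.sum_const, Finset.sum_filter]
      apply Finset.sum_le_sum
      rintro ⟨x, y⟩ _
      dsimp only
      have hnn : (0 : ℝ) ≤ a.factorial * q ^ a := by positivity
      by_cases hr : rank x + a ≤ rank y
      · have h5 := hpb (rank y - rank x) (by omega) x y
        rw [if_pos hr]
        by_cases hxy : x ≤ y
        · rw [if_pos ⟨hxy, hr⟩]; exact h5.1
        · rw [if_neg (fun h => hxy h.1)]
          by_contra hne
          exact hxy (h5.2 (fun h => hne h.le))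
      · rw [if_neg hr, if_neg (fun h => hr h.2)]
    rw [div_mul_eq_mul_div, div_le_iff₀ (by positivity)]
    rw [hq, div_pow] at h3
    have h6 : (0 : ℝ) < (D : ℝ) ^ a := by positivity
    calc (b : ℝ) * (D : ℝ) ^ a ≤ _ := mul_le_mul_of_nonneg_right h3 h6.le
      _ = _ := by field_simp
end

section
/- For every n ≥ 2 and D ≥ 2, the number of antichains A_{D,n} in the box {1,...,n}^D (with the product partial order) satisfies A_{D,n} ≤ 2^{(1 + C_n·(log D)/√D)·N_{D,n}}, where N_{D,n} is the size of the middle layer {x : Σ x_i = ⌊D(n+1)/2⌋} and C_n is a constant depending only on n. -/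
open Classical

/-- Symmetric chain decomposition of the box. -/
theorem box_scd (m : ℕ) (D : ℕ) :
    ∃ (κ : Type) (c : (Fin D → Fin (m+1)) → κ) (b : κ → ℕ),
      (∀ x, b (c x) ≤ ∑ i, (x i : ℕ) ∧ ∑ i, (x i : ℕ) + b (c x) ≤ D * m) ∧
      (∀ x r, b (c x) ≤ r → r + b (c x) ≤ D * m → ∃ y, c y = c x ∧ ∑ i, (y i : ℕ) = r) ∧
      (∀ x y, c x = c y → x ≤ y ∨ y ≤ x) := by
  induction D with
  | zero =>
    refine ⟨Unit, fun _ => (), fun _ => 0, ?_, ?_, ?_⟩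
    · intro x; simp
    · intro x r _ h; exact ⟨x, rfl, by simp at h ⊢; omega⟩
    · intro x y _; left; intro i; exact i.elim0
  | succ D ih =>
    obtain ⟨κ, c, b, h1, h2, h3⟩ := ih
    have hR : (D + 1) * m = D * m + m := by ring
    refine ⟨κ × ℕ, fun x => (c (Fin.tail x), min (x 0 : ℕ) (D * m - b (c (Fin.tail x)) - ∑ i, (Fin.tail x i : ℕ))),
      fun k => b k.1 + k.2, ?_, ?_, ?_⟩
    · intro x
      have := h1 (Fin.tail x)
      have h0 : (x 0 : ℕ) < m + 1 := (x 0).2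
      have hs : ∑ i, (x i : ℕ) = x 0 + ∑ i, (Fin.tail x i : ℕ) := Fin.sum_univ_succ _
      rw [hs, hR]
      dsimp only
      omega
    · intro x r
      have := h1 (Fin.tail x)
      have h0 : (x 0 : ℕ) < m + 1 := (x 0).2
      rw [hR]
      dsimp only
      intro ha hb
      generalize hj : min (x 0 : ℕ) (D * m - b (c (Fin.tail x)) - ∑ i, (Fin.tail x i : ℕ)) = j at *
      by_cases hr : r + b (c (Fin.tail x)) ≤ D * m
      · obtain ⟨y, hy1, hy2⟩ := h2 (Fin.tail x) (r - j) (by omega) (by omega)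
        refine ⟨Fin.cons ⟨j, by omega⟩ y, ?_, ?_⟩
        · simp only [Fin.tail_cons, Fin.cons_zero, hy1, hy2, Prod.mk.injEq, true_and]
          omega
        · simp only [Fin.sum_univ_succ, Fin.cons_zero, Fin.cons_succ, hy2]
          omega
      · obtain ⟨y, hy1, hy2⟩ := h2 (Fin.tail x) (D * m - b (c (Fin.tail x)) - j) (by omega) (by omega)
        refine ⟨Fin.cons ⟨r - (D * m - b (c (Fin.tail x)) - j), by omega⟩ y, ?_, ?_⟩
        · simp only [Fin.tail_cons, Fin.cons_zero, hy1, hy2, Prod.mk.injEq, true_and]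
          omega
        · simp only [Fin.sum_univ_succ, Fin.cons_zero, Fin.cons_succ, hy2]
          omega
    · have key : ∀ x y : Fin (D+1) → Fin (m+1), Fin.tail x ≤ Fin.tail y → c (Fin.tail x) = c (Fin.tail y) →
          min (x 0 : ℕ) (D * m - b (c (Fin.tail x)) - ∑ i, (Fin.tail x i : ℕ)) =
          min (y 0 : ℕ) (D * m - b (c (Fin.tail y)) - ∑ i, (Fin.tail y i : ℕ)) → x ≤ y ∨ y ≤ x := by
        intro x y hle hc hm
        have hsum : ∑ i, (Fin.tail x i : ℕ) ≤ ∑ i, (Fin.tail y i : ℕ) :=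
          Finset.sum_le_sum fun i _ => hle i
        have e1 := h1 (Fin.tail x)
        have e2 := h1 (Fin.tail y)
        rw [hc] at e1 hm
        by_cases h : x 0 ≤ y 0
        · left
          intro i
          refine Fin.cases h (fun i => hle i) i
        · right
          have h' : (y 0 : ℕ) < x 0 := by
            rw [not_le] at h; exact h
          have heq : ∑ i, (Fin.tail x i : ℕ) = ∑ i, (Fin.tail y i : ℕ) := by omega
          have := (Finset.sum_eq_sum_iff_of_le (fun i _ => Fin.le_def.1 (hle i))).1 heq
          intro i
          refine Fin.cases (le_of_not_ge h) (fun i => ?_) i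
          have := this i (Finset.mem_univ _)
          exact le_of_eq (Fin.ext this.symm)
      intro x y hxy
      simp only [Prod.mk.injEq] at hxy
      rcases h3 _ _ hxy.1 with h | h
      · exact key x y h hxy.1 hxy.2
      · exact (key y x h hxy.1.symm hxy.2.symm).symm

theorem box_chain_map (m D : ℕ) : ∃ g : (Fin D → Fin (m+1)) → (Fin D → Fin (m+1)),
    (∀ x, ∑ i, (g x i : ℕ) = D * m / 2) ∧ ∀ x y, g x = g y → x ≤ y ∨ y ≤ x := by
  obtain ⟨κ, c, b, h1, h2, h3⟩ := box_scd m D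
  have : ∀ x, ∃ y, c y = c x ∧ ∑ i, (y i : ℕ) = D * m / 2 := by
    intro x
    have := h1 x
    exact h2 x _ (by omega) (by omega)
  choose g hg1 hg2 using this
  refine ⟨g, hg2, fun x y h => h3 x y ?_⟩
  rw [← hg1 x, ← hg1 y, h]

theorem eq_of_comp_of_sum {m D : ℕ} {x y : Fin D → Fin (m+1)} (h : x ≤ y ∨ y ≤ x)
    (hs : ∑ i, (x i : ℕ) = ∑ i, (y i : ℕ)) : x = y := by
  rcases h with h | h
  · have := (Finset.sum_eq_sum_iff_of_le (fun i _ => Fin.le_def.1 (h i))).1 hs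
    ext i; exact this i (Finset.mem_univ _)
  · have := (Finset.sum_eq_sum_iff_of_le (fun i _ => Fin.le_def.1 (h i))).1 hs.symm
    ext i; exact (this i (Finset.mem_univ _)).symm

/-- Chain counting. -/
theorem card_le_pairs {α : Type*} [Fintype α] [PartialOrder α] (M : Finset α) (h : α → α)
    (hM : ∀ x, h x ∈ M) (hc : ∀ x y, h x = h y → x ≤ y ∨ y ≤ x) (F : Finset α) :
    F.card ≤ M.card + ((F ×ˢ F).filter (fun p => p.1 < p.2 ∧ h p.1 = h p.2)).card := by
  have e := Finset.card_filter_add_card_filter_not (s := F) (fun y => ∃ x ∈ F, x < y ∧ h x = h y)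
  have a1 : (F.filter (fun y => ¬ ∃ x ∈ F, x < y ∧ h x = h y)).card ≤ M.card := by
    apply Finset.card_le_card_of_injOn h (fun x _ => hM x)
    intro x hx y hy hxy
    simp only [Finset.coe_filter, Set.mem_ofPred_eq, not_exists, not_and] at hx hy
    rcases hc x y hxy with hl | hl
    · rcases hl.lt_or_eq with hl | hl
      · exact absurd hxy (hy.2 x hx.1 hl)
      · exact hl
    · rcases hl.lt_or_eq with hl | hl
      · exact absurd hxy.symm (hx.2 y hy.1 hl)
      · exact hl.symm
  have a2 : (F.filter (fun y => ∃ x ∈ F, x < y ∧ h x = h y)).card ≤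
      ((F ×ˢ F).filter (fun p => p.1 < p.2 ∧ h p.1 = h p.2)).card := by
    refine le_trans (Finset.card_le_card ?_) (Finset.card_image_le (f := Prod.snd))
    intro y hy
    simp only [Finset.mem_filter] at hy
    obtain ⟨hy, x, hx, hlt, heq⟩ := hy
    simp only [Finset.mem_image, Finset.mem_filter, Finset.mem_product]
    exact ⟨(x, y), ⟨⟨hx, hy⟩, hlt, heq⟩, rfl⟩
  omega

theorem swap_count {m D : ℕ} (g : (Fin D → Fin (m+1)) → (Fin D → Fin (m+1)))
    (hc : ∀ x y, g x = g y → x ≤ y ∨ y ≤ x) (x y : Fin D → Fin (m+1)) (i : Fin D)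
    (S : Finset (Fin D)) (hS : ∀ j ∈ S, x j = x i ∧ y j ≠ y i) :
    S.card * (Finset.univ.filter (fun σ : Equiv.Perm (Fin D) => g (x ∘ σ) = g (y ∘ σ))).card
      ≤ D.factorial := by
  rw [← Finset.card_product]
  have : D.factorial = (Finset.univ : Finset (Equiv.Perm (Fin D))).card := by
    rw [Finset.card_univ, Fintype.card_perm, Fintype.card_fin]
  rw [this]
  apply Finset.card_le_card_of_injOn (fun p => Equiv.swap i p.1 * p.2) (fun _ _ => Finset.mem_coe.2 (Finset.mem_univ _))
  rintro ⟨j, σ⟩ h1 ⟨j', σ'⟩ h2 heq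
  simp only [Finset.coe_product, Finset.coe_filter, Finset.mem_univ, true_and, Set.mem_prod,
    Finset.mem_coe, Set.mem_ofPred_eq] at h1 h2 heq
  have hx : ∀ j ∈ S, x ∘ (Equiv.swap i j) = x := by
    intro j hj
    funext k
    simp only [Function.comp]
    rcases Equiv.swap_apply_eq_iff.1 (rfl : Equiv.swap i j k = _) with _
    by_cases h1 : k = i
    · subst h1; simp [(hS j hj).1]
    · by_cases h2 : k = j
      · subst h2; simp [(hS k hj).1]
      · rw [Equiv.swap_apply_of_ne_of_ne h1 h2]
  have e1 : x ∘ σ = x ∘ (Equiv.swap i j * σ : Equiv.Perm (Fin D)) := by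
    rw [Equiv.Perm.coe_mul, ← Function.comp_assoc, hx j h1.1]
  have e2 : x ∘ σ' = x ∘ (Equiv.swap i j' * σ' : Equiv.Perm (Fin D)) := by
    rw [Equiv.Perm.coe_mul, ← Function.comp_assoc, hx j' h2.1]
  have e3 : g (y ∘ σ) = g (y ∘ σ') := by
    rw [← h1.2, ← h2.2, e1, e2, heq]
  have e4 : y ∘ σ = y ∘ σ' := by
    apply eq_of_comp_of_sum (hc _ _ e3)
    have := Equiv.sum_comp σ (fun i => (y i : ℕ))
    have := Equiv.sum_comp σ' (fun i => (y i : ℕ))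
    simp only [Function.comp]
    omega
  have hjj : j = j' := by
    by_contra hne
    -- evaluate at the preimage of j under the common permutation
    have hσ : σ = Equiv.swap i j * (Equiv.swap i j * σ) := by
      rw [← mul_assoc, Equiv.swap_mul_self, one_mul]
    have hσ' : σ' = Equiv.swap i j' * (Equiv.swap i j * σ) := by
      rw [heq, ← mul_assoc, Equiv.swap_mul_self, one_mul]
    have := congrFun e4 ((Equiv.swap i j * σ)⁻¹ j)
    simp only [Function.comp] at this
    have a1 : σ ((Equiv.swap i j * σ)⁻¹ j) = i := by
      conv_lhs => rw [hσ]
      simp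
    have a2 : σ' ((Equiv.swap i j * σ)⁻¹ j) = j := by
      conv_lhs => rw [hσ']
      rw [Equiv.Perm.mul_apply, ← Equiv.Perm.mul_apply _ _ j, mul_inv_cancel, Equiv.Perm.one_apply]
      apply Equiv.swap_apply_of_ne_of_ne _ hne
      rintro rfl
      exact (hS _ h1.1).2 rfl
    rw [a1, a2] at this
    exact (hS j h1.1).2 this.symm
  subst hjj
  rw [mul_left_cancel heq]

theorem exists_swap_set {m D : ℕ} (x y : Fin D → Fin (m+1)) (hxy : x < y) (q : ℝ) (hq : 0 < q)
    (hx : ∀ v, q ≤ ((Finset.univ.filter (fun i => x i = v)).card : ℝ))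
    (hy : Function.Surjective y) :
    ∃ (i : Fin D) (S : Finset (Fin D)), (∀ j ∈ S, x j = x i ∧ y j ≠ y i) ∧ q / 2 ≤ (S.card : ℝ) := by
  have hxs : Function.Surjective x := by
    intro v
    have h := hx v
    have : 0 < (Finset.univ.filter (fun i => x i = v)).card := by
      have := lt_of_lt_of_le hq h
      exact_mod_cast this
    obtain ⟨i, hi⟩ := Finset.card_pos.1 this
    exact ⟨i, (Finset.mem_filter.1 hi).2⟩
  have hex : ∃ i i', x i = x i' ∧ y i ≠ y i' := by
    by_contra hcon
    push Not at hcon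
    choose r hr using hxs
    have hf : ∀ i, y (r (x i)) = y i := fun i => hcon _ _ (hr _)
    have hsurj : Function.Surjective (fun a => y (r a)) := by
      intro b
      obtain ⟨i, hi⟩ := hy b
      exact ⟨x i, by simp only [hf, hi]⟩
    have hbij : Function.Bijective (fun a => y (r a)) := Finite.surjective_iff_bijective.1 hsurj
    have hle : ∀ a, a ≤ y (r a) := fun a => by
      have := hxy.le (r a)
      rwa [hr] at this
    have hsum : ∑ a : Fin (m+1), (a : ℕ) = ∑ a, (y (r a) : ℕ) :=
      (Function.Bijective.sum_comp hbij (fun a : Fin (m+1) => (a : ℕ))).symm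
    have := (Finset.sum_eq_sum_iff_of_le (fun a _ => Fin.le_def.1 (hle a))).1 hsum
    apply hxy.ne
    ext i
    rw [← hf i]
    exact this (x i) (Finset.mem_univ _)
  obtain ⟨i, i', h1, h2⟩ := hex
  set A := Finset.univ.filter (fun j => x j = x i ∧ y j ≠ y i)
  set B := Finset.univ.filter (fun j => x j = x i' ∧ y j ≠ y i')
  have hsub : Finset.univ.filter (fun j => x j = x i) ⊆ A ∪ B := by
    intro j hj
    simp only [A, B, Finset.mem_union, Finset.mem_filter, Finset.mem_univ, true_and] at hj ⊢
    by_cases h : y j = y i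
    · right; exact ⟨hj.trans h1, by rw [h]; exact h2⟩
    · left; exact ⟨hj, h⟩
  have hcard : q ≤ (A.card : ℝ) + B.card := by
    refine (hx (x i)).trans ?_
    exact_mod_cast (Finset.card_le_card hsub).trans (Finset.card_union_le _ _)
  by_cases hA : q / 2 ≤ (A.card : ℝ)
  · exact ⟨i, A, fun j hj => (Finset.mem_filter.1 hj).2, hA⟩
  · exact ⟨i', B, fun j hj => (Finset.mem_filter.1 hj).2, by linarith⟩

/-- Supersaturation. -/
theorem box_supersat {m D : ℕ} (N : Finset (Fin D → Fin (m+1)))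
    (hN : ∀ x, x ∈ N ↔ ∑ i, (x i : ℕ) = D * m / 2) (q : ℝ) (hq : 0 < q)
    (F : Finset (Fin D → Fin (m+1)))
    (hF : ∀ x ∈ F, ∀ v, q ≤ ((Finset.univ.filter (fun i => x i = v)).card : ℝ)) :
    ((F.card : ℝ) - N.card) * (q / 2) ≤ (((F ×ˢ F).filter (fun p => p.1 < p.2)).card : ℝ) := by
  obtain ⟨g, hg, hc⟩ := box_chain_map m D
  set E := (F ×ˢ F).filter (fun p => p.1 < p.2) with hE
  have h1 : ∀ σ : Equiv.Perm (Fin D), F.card ≤ N.card + (E.filter (fun p => g (p.1 ∘ σ) = g (p.2 ∘ σ))).card := by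
    intro σ
    have := card_le_pairs N (fun x => g (x ∘ σ)) (fun x => (hN _).2 (hg _)) (by
      intro x y hxy
      have back : ∀ x y : Fin D → Fin (m+1), x ∘ σ ≤ y ∘ σ → x ≤ y := by
        intro x y h i
        have := h (σ.symm i)
        simpa using this
      rcases hc _ _ hxy with h | h
      · exact Or.inl (back _ _ h)
      · exact Or.inr (back _ _ h)) F
    rw [← Finset.filter_filter] at this
    convert this
  have h2 : ∀ p ∈ E, (q / 2) * ((Finset.univ.filter (fun σ : Equiv.Perm (Fin D) => g (p.1 ∘ σ) = g (p.2 ∘ σ))).card : ℝ)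
      ≤ D.factorial := by
    intro p hp
    simp only [hE, Finset.mem_filter, Finset.mem_product] at hp
    obtain ⟨i, S, hS, hSc⟩ := exists_swap_set p.1 p.2 hp.2 q hq (hF _ hp.1.1) (by
      intro v
      have : 0 < (Finset.univ.filter (fun i => p.2 i = v)).card := by
        have := lt_of_lt_of_le hq (hF _ hp.1.2 v)
        exact_mod_cast this
      obtain ⟨i, hi⟩ := Finset.card_pos.1 this
      exact ⟨i, (Finset.mem_filter.1 hi).2⟩)
    have := swap_count g hc p.1 p.2 i S hS
    calc _ ≤ (S.card : ℝ) * _ := mul_le_mul_of_nonneg_right hSc (Nat.cast_nonneg _)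
      _ ≤ _ := by exact_mod_cast this
  have h3 : ∑ σ : Equiv.Perm (Fin D), ((E.filter (fun p => g (p.1 ∘ σ) = g (p.2 ∘ σ))).card : ℝ) =
      ∑ p ∈ E, ((Finset.univ.filter (fun σ : Equiv.Perm (Fin D) => g (p.1 ∘ σ) = g (p.2 ∘ σ))).card : ℝ) := by
    simp only [Finset.card_filter, Nat.cast_sum]
    rw [Finset.sum_comm]
  have h4 : (D.factorial : ℝ) * ((F.card : ℝ) - N.card) ≤ ∑ σ : Equiv.Perm (Fin D), ((E.filter (fun p => g (p.1 ∘ σ) = g (p.2 ∘ σ))).card : ℝ) := by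
    have : (D.factorial : ℝ) * ((F.card : ℝ) - N.card) = ∑ σ : Equiv.Perm (Fin D), ((F.card : ℝ) - N.card) := by
      rw [Finset.sum_const, Finset.card_univ, Fintype.card_perm, Fintype.card_fin, nsmul_eq_mul]
    rw [this]
    apply Finset.sum_le_sum
    intro σ _
    have : (F.card : ℝ) ≤ N.card + (E.filter (fun p => g (p.1 ∘ σ) = g (p.2 ∘ σ))).card := by
      exact_mod_cast h1 σ
    linarith
  have h5 : (q / 2) * ∑ p ∈ E, ((Finset.univ.filter (fun σ : Equiv.Perm (Fin D) => g (p.1 ∘ σ) = g (p.2 ∘ σ))).card : ℝ)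
      ≤ E.card * D.factorial := by
    rw [Finset.mul_sum]
    refine (Finset.sum_le_sum h2).trans ?_
    rw [Finset.sum_const, nsmul_eq_mul]
  have hD : (0 : ℝ) < D.factorial := by exact_mod_cast D.factorial_pos
  rw [h3] at h4
  have h6 := mul_le_mul_of_nonneg_left h4 (by linarith : 0 ≤ q / 2)
  have h7 : (D.factorial : ℝ) * (((F.card : ℝ) - N.card) * (q / 2)) ≤ D.factorial * E.card := by
    nlinarith
  exact le_of_mul_le_mul_left h7 hD

theorem second_moment (n : ℕ) (f : Fin n → ℝ) (hf : ∑ a, f a = 0) (D : ℕ) :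
    ∑ x : Fin D → Fin n, (∑ i, f (x i)) ^ 2 * n = D * n ^ D * ∑ a, f a ^ 2 := by
  induction D with
  | zero => simp
  | succ D ih =>
    rw [← (Fin.consEquiv (fun _ : Fin (D+1) => Fin n)).sum_comp, Fintype.sum_prod_type]
    simp only [Fin.consEquiv_apply, Fin.sum_univ_succ, Fin.cons_zero, Fin.cons_succ]
    have : ∀ a : Fin n, ∑ x : Fin D → Fin n, (f a + ∑ i, f (x i)) ^ 2 * n
        = (n : ℝ) ^ D * n * f a ^ 2 + f a * (∑ x : Fin D → Fin n, 2 * (∑ i, f (x i)) * n)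
          + ∑ x : Fin D → Fin n, (∑ i, f (x i)) ^ 2 * n := by
      intro a
      have h1 : (n : ℝ) ^ D * n * f a ^ 2 = ∑ x : Fin D → Fin n, n * f a ^ 2 := by
        rw [Finset.sum_const, Finset.card_univ, Fintype.card_fun, Fintype.card_fin, Fintype.card_fin,
          nsmul_eq_mul]
        push_cast; ring
      rw [h1, Finset.mul_sum, ← Finset.sum_add_distrib, ← Finset.sum_add_distrib]
      apply Finset.sum_congr rfl
      intro x _
      ring
    simp only [this]
    rw [Finset.sum_add_distrib, Finset.sum_add_distrib, ← Finset.sum_mul, hf, ih, ← Finset.mul_sum,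
      Finset.sum_const, Finset.card_univ, Fintype.card_fin, nsmul_eq_mul]
    push_cast
    ring

theorem cheb (n : ℕ) (hn : 0 < n) (f : Fin n → ℝ) (hf : ∑ a, f a = 0) (K : ℝ) (hK : ∀ a, f a ^ 2 ≤ K)
    (D : ℕ) (r : ℝ) (hr : 0 ≤ r) (B : Finset (Fin D → Fin n)) (hB : ∀ x ∈ B, r ≤ |∑ i, f (x i)|) :
    (B.card : ℝ) * r ^ 2 ≤ D * n ^ D * K := by
  have h := second_moment n f hf D
  rw [← Finset.sum_mul] at h
  have h1 : (B.card : ℝ) * r ^ 2 ≤ ∑ x : Fin D → Fin n, (∑ i, f (x i)) ^ 2 := by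
    calc (B.card : ℝ) * r ^ 2 = ∑ x ∈ B, r ^ 2 := by rw [Finset.sum_const, nsmul_eq_mul]
      _ ≤ ∑ x ∈ B, (∑ i, f (x i)) ^ 2 := by
          apply Finset.sum_le_sum
          intro x hx
          rw [← sq_abs (∑ i, f (x i))]
          exact pow_le_pow_left₀ hr (hB x hx) 2
      _ ≤ _ := Finset.sum_le_sum_of_subset_of_nonneg (Finset.subset_univ _) (fun _ _ _ => sq_nonneg _)
  have h2 : ∑ a, f a ^ 2 ≤ n * K := by
    calc _ ≤ ∑ a : Fin n, K := Finset.sum_le_sum fun a _ => hK a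
      _ = _ := by simp
  have hn' : (0 : ℝ) < n := by exact_mod_cast hn
  have h3 : (∑ x : Fin D → Fin n, (∑ i, f (x i)) ^ 2) * n ≤ (D * n ^ D * K) * n := by
    rw [h]
    calc _ ≤ (D * n ^ D : ℝ) * (n * K) := mul_le_mul_of_nonneg_left h2 (by positivity)
      _ = _ := by ring
  exact h1.trans (le_of_mul_le_mul_right h3 hn')

/-- few atypical points -/
theorem atypical (n : ℕ) (hn : 0 < n) (D : ℕ) (hD : 0 < D) :
    ((Finset.univ.filter (fun x : Fin D → Fin n => ¬ ∀ v, (D : ℝ) / (2 * n) ≤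
      ((Finset.univ.filter (fun i => x i = v)).card : ℝ))).card : ℝ) ≤ 4 * n ^ 3 * n ^ D / D := by
  have hn' : (0 : ℝ) < n := by exact_mod_cast hn
  have hD' : (0 : ℝ) < D := by exact_mod_cast hD
  set B : Fin n → Finset (Fin D → Fin n) := fun v => Finset.univ.filter (fun x : Fin D → Fin n =>
    ((Finset.univ.filter (fun i => x i = v)).card : ℝ) < (D : ℝ) / (2 * n)) with hB
  have h1 : Finset.univ.filter (fun x : Fin D → Fin n => ¬ ∀ v, (D : ℝ) / (2 * n) ≤
      ((Finset.univ.filter (fun i => x i = v)).card : ℝ)) ⊆ Finset.univ.biUnion B := by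
    intro x hx
    simp only [Finset.mem_filter, Finset.mem_univ, true_and, not_forall, not_le] at hx
    obtain ⟨v, hv⟩ := hx
    simp only [Finset.mem_biUnion, Finset.mem_univ, true_and, hB, Finset.mem_filter]
    exact ⟨v, hv⟩
  have h2 : ∀ v, ((B v).card : ℝ) ≤ 4 * n ^ 2 * n ^ D / D := by
    intro v
    have := cheb n hn (fun a => (if a = v then 1 else 0) - 1 / (n : ℝ)) (by
        rw [Finset.sum_sub_distrib]; simp; field_simp; simp) 1 (by
        intro a
        have : 0 < 1 / (n : ℝ) := by positivity
        have : 1 / (n : ℝ) ≤ 1 := by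
          rw [div_le_one hn']; exact_mod_cast hn
        split_ifs <;> nlinarith) D (D / (2 * n)) (by positivity) (B v) (by
        intro x hx
        simp only [hB, Finset.mem_filter, Finset.mem_univ, true_and] at hx
        have e : ∑ i, ((if x i = v then 1 else 0) - 1 / (n : ℝ)) =
            ((Finset.univ.filter (fun i => x i = v)).card : ℝ) - D / n := by
          rw [Finset.sum_sub_distrib, Finset.card_filter]
          push_cast
          simp
          ring
        rw [e]
        have e2 : (D : ℝ) / n = D / (2 * n) + D / (2 * n) := by field_simp; ring
        rw [abs_sub_comm]
        refine le_trans ?_ (le_abs_self _)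
        linarith)
    rw [le_div_iff₀ hD']
    have e3 : ((B v).card : ℝ) * (D / (2 * n)) ^ 2 * (4 * n ^ 2) = ((B v).card * D) * D := by
      field_simp; ring
    have : ((B v).card * D : ℝ) * D ≤ (4 * n ^ 2 * n ^ D) * D := by
      rw [← e3]
      calc _ ≤ (D * n ^ D * 1 : ℝ) * (4 * n ^ 2) := mul_le_mul_of_nonneg_right this (by positivity)
        _ = _ := by ring
    exact le_of_mul_le_mul_right this hD'
  calc _ ≤ (((Finset.univ.biUnion B).card : ℕ) : ℝ) := by exact_mod_cast Finset.card_le_card h1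
    _ ≤ ∑ v, ((B v).card : ℝ) := by exact_mod_cast Finset.card_biUnion_le
    _ ≤ ∑ v : Fin n, (4 * n ^ 2 * n ^ D / D : ℝ) := Finset.sum_le_sum fun v _ => h2 v
    _ = _ := by simp; ring

/-- middle layer is large, given that every layer has size at most `N`. -/
theorem layer_large (n : ℕ) (hn : 0 < n) (D : ℕ) (hD : 0 < D) (N : ℕ)
    (hN : ∀ r : ℕ, (Finset.univ.filter (fun x : Fin D → Fin n => ∑ i, (x i : ℕ) = r)).card ≤ N) :
    (n : ℝ) ^ D ≤ 7 * n * Real.sqrt D * N := by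
  have hn' : (1 : ℝ) ≤ n := by exact_mod_cast hn
  have hD' : (1 : ℝ) ≤ D := by exact_mod_cast hD
  have hs : 1 ≤ Real.sqrt D := Real.one_le_sqrt.2 hD'
  have hss : Real.sqrt D ^ 2 = D := Real.sq_sqrt (by linarith)
  set s := Real.sqrt D
  set μ : ℝ := ((n : ℝ) - 1) / 2 with hμ
  have hsumf : ∀ x : Fin D → Fin n, ∑ i, ((x i : ℝ) - μ) = ((∑ i, (x i : ℕ) : ℕ) : ℝ) - D * μ := by
    intro x
    rw [Finset.sum_sub_distrib]; simp
  set G := Finset.univ.filter (fun x : Fin D → Fin n => |∑ i, ((x i : ℝ) - μ)| < 2 * n * s) with hG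
  set B := Finset.univ.filter (fun x : Fin D → Fin n => ¬ |∑ i, ((x i : ℝ) - μ)| < 2 * n * s) with hB
  have e0 : (G.card : ℝ) + B.card = n ^ D := by
    have := Finset.card_filter_add_card_filter_not (s := (Finset.univ : Finset (Fin D → Fin n)))
      (fun x : Fin D → Fin n => |∑ i, ((x i : ℝ) - μ)| < 2 * n * s)
    rw [Finset.card_univ, Fintype.card_fun, Fintype.card_fin, Fintype.card_fin] at this
    have h : G.card + B.card = n ^ D := this
    exact_mod_cast h
  have e1 : (B.card : ℝ) * (2 * n * s) ^ 2 ≤ D * n ^ D * n ^ 2 := by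
    refine cheb n hn (fun a => (a : ℝ) - μ) ?_ _ ?_ D _ (by positivity) B ?_
    · rw [Finset.sum_sub_distrib]
      have h := Finset.sum_range_id_mul_two n
      rw [Finset.sum_range] at h
      have h' : (∑ a : Fin n, (a : ℝ)) * 2 = n * (n - 1) := by
        have : ((n - 1 : ℕ) : ℝ) = (n : ℝ) - 1 := by
          rw [Nat.cast_sub hn]; simp
        rw [← this]; exact_mod_cast h
      simp [hμ]; linarith
    · intro a
      have h1 : (a : ℝ) ≤ n - 1 := by
        have : (a : ℕ) + 1 ≤ n := a.2
        have : ((a : ℕ) : ℝ) + 1 ≤ n := by exact_mod_cast this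
        linarith
      have h2 : (0 : ℝ) ≤ (a : ℕ) := Nat.cast_nonneg _
      apply sq_le_sq' <;> linarith
    · intro x hx
      exact not_lt.1 (Finset.mem_filter.1 hx).2
  have e2 : (B.card : ℝ) * 4 ≤ n ^ D := by
    have : (B.card : ℝ) * 4 * (D * n ^ 2) ≤ n ^ D * (D * n ^ 2) := by
      have : (2 * n * s) ^ 2 = 4 * n ^ 2 * (D : ℝ) := by rw [← hss]; ring
      rw [this] at e1; linarith
    exact le_of_mul_le_mul_right this (by positivity)
  have e3 : (G.card : ℝ) ≤ N * (G.image (fun x => ((∑ i, (x i : ℕ) : ℕ) : ℤ))).card := by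
    have := Finset.card_le_mul_card_image (f := fun x : Fin D → Fin n => ((∑ i, (x i : ℕ) : ℕ) : ℤ)) G N (by
      intro b hb
      obtain ⟨x, hx, rfl⟩ := Finset.mem_image.1 hb
      refine le_trans (Finset.card_le_card ?_) (hN (∑ i, (x i : ℕ)))
      intro y hy
      have := (Finset.mem_filter.1 hy).2
      simp only [Finset.mem_filter, Finset.mem_univ, true_and]
      exact_mod_cast this)
    exact_mod_cast this
  have e4 : ((G.image (fun x => ((∑ i, (x i : ℕ) : ℕ) : ℤ))).card : ℝ) ≤ 5 * n * s := by
    have hsub : G.image (fun x => ((∑ i, (x i : ℕ) : ℕ) : ℤ)) ⊆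
        Finset.Icc ⌈D * μ - 2 * n * s⌉ ⌊D * μ + 2 * n * s⌋ := by
      intro b hb
      obtain ⟨x, hx, rfl⟩ := Finset.mem_image.1 hb
      have := (Finset.mem_filter.1 hx).2
      rw [hsumf, abs_lt] at this
      rw [Finset.mem_Icc, Int.ceil_le, Int.le_floor]
      rw [Int.cast_natCast]
      constructor <;> linarith
    have hc := Finset.card_le_card hsub
    rw [Int.card_Icc] at hc
    have h1 := Int.floor_le (D * μ + 2 * n * s)
    have h2 := Int.le_ceil (D * μ - 2 * n * s)
    have hns : 1 ≤ n * s := by nlinarith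
    have : (((⌊D * μ + 2 * n * s⌋ + 1 - ⌈D * μ - 2 * n * s⌉).toNat : ℕ) : ℝ) ≤ 5 * n * s := by
      have : (((⌊D * μ + 2 * n * s⌋ + 1 - ⌈D * μ - 2 * n * s⌉).toNat : ℤ) : ℝ) ≤ 5 * n * s := by
        rw [Int.toNat_eq_max]
        push_cast
        apply max_le
        · linarith
        · nlinarith
      exact_mod_cast this
    exact le_trans (by exact_mod_cast hc) this
  have e5 : (G.card : ℝ) ≤ N * (5 * n * s) := e3.trans (mul_le_mul_of_nonneg_left e4 (Nat.cast_nonneg _))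
  have : (0 : ℝ) ≤ N * (n * s) := by positivity
  nlinarith

/-- the number of antichains inside `F` -/
noncomputable def acount {α : Type*} [PartialOrder α] (F : Finset α) : ℕ :=
  (F.powerset.filter (fun A : Finset α => IsAntichain (· ≤ ·) (A : Set α))).card

theorem acount_le_two_pow {α : Type*} [PartialOrder α] (F : Finset α) : acount F ≤ 2 ^ F.card := by
  unfold acount
  exact (Finset.card_filter_le _ _).trans (Finset.card_powerset F).le

theorem acount_rec {α : Type*} [PartialOrder α] (F : Finset α) (x : α) :
    acount F ≤ acount (F.erase x) + acount (F.filter (fun y => ¬ x ≤ y)) := by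
  have e := Finset.card_filter_add_card_filter_not
    (s := F.powerset.filter (fun A : Finset α => IsAntichain (· ≤ ·) (A : Set α))) (fun A => x ∈ A)
  unfold acount
  rw [← e, add_comm]
  apply add_le_add
  · apply Finset.card_le_card
    intro A hA
    simp only [Finset.mem_filter, Finset.mem_powerset] at hA ⊢
    exact ⟨Finset.subset_erase.2 ⟨hA.1.1, hA.2⟩, hA.1.2⟩
  · apply Finset.card_le_card_of_injOn (fun A => A.erase x)
    · intro A hA
      simp only [Finset.coe_filter, Finset.mem_filter, Finset.mem_powerset, Set.mem_ofPred_eq] at hA ⊢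
      refine ⟨?_, hA.1.2.subset (by simp)⟩
      intro y hy
      rw [Finset.mem_erase] at hy
      rw [Finset.mem_filter]
      exact ⟨hA.1.1 hy.2, fun hle => hA.1.2 hA.2 hy.2 hy.1.symm hle⟩
    · intro A hA B hB h
      simp only [Finset.coe_filter, Finset.mem_filter, Set.mem_ofPred_eq] at hA hB h
      rw [← Finset.insert_erase hA.2, ← Finset.insert_erase hB.2, h]

theorem acount_split {α : Type*} [PartialOrder α] (F T : Finset α) (hT : T ⊆ F) :
    acount F ≤ 2 ^ (F \ T).card * acount T := by
  unfold acount
  rw [← Finset.card_powerset, ← Finset.card_product]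
  apply Finset.card_le_card_of_injOn (fun A => (A \ T, A ∩ T))
  · intro A hA
    simp only [Finset.coe_filter, Finset.mem_powerset, Set.mem_ofPred_eq, Finset.coe_product,
      Set.mem_prod, Finset.mem_coe] at hA ⊢
    exact ⟨Finset.sdiff_subset_sdiff hA.1 le_rfl, Finset.inter_subset_right,
      hA.2.subset (by simp)⟩
  · intro A _ B _ h
    simp only [Prod.mk.injEq] at h
    rw [← Finset.sdiff_union_inter A T, ← Finset.sdiff_union_inter B T, h.1, h.2]

theorem acount_exp {α : Type*} [PartialOrder α] (T : Finset α) (M M1 d t B : ℝ) (ht : 0 ≤ t)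
    (hB0 : 0 ≤ B)
    (htd : Real.exp (-(t * d)) ≤ t) (hB : ∀ F ⊆ T, (F.card : ℝ) ≤ M → (acount F : ℝ) ≤ B)
    (hd : ∀ F ⊆ T, M < (F.card : ℝ) → (F.card : ℝ) ≤ M1 →
      ∃ x ∈ F, d ≤ ((F.filter (fun y => x < y)).card : ℝ)) :
    ∀ F ⊆ T, (F.card : ℝ) ≤ M1 → (acount F : ℝ) ≤ B * Real.exp (t * F.card) := by
  intro F
  induction F using Finset.strongInduction with
  | H F ih =>
    intro hF hM1
    by_cases hM : (F.card : ℝ) ≤ M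
    · refine (hB F hF hM).trans (le_mul_of_one_le_right hB0 (Real.one_le_exp (by positivity)))
    · obtain ⟨x, hx, hxd⟩ := hd F hF (not_le.1 hM) hM1
      have s1 : F.erase x ⊂ F := Finset.erase_ssubset hx
      have s2 : F.filter (fun y => ¬ x ≤ y) ⊂ F :=
        Finset.filter_ssubset.2 ⟨x, hx, by simp⟩
      have c1 : ((F.erase x).card : ℝ) + 1 = F.card := by
        exact_mod_cast Finset.card_erase_add_one hx
      have c2 : ((F.filter (fun y => ¬ x ≤ y)).card : ℝ) + 1 + d ≤ F.card := by
        have e := Finset.card_filter_add_card_filter_not (s := F) (fun y => x ≤ y)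
        have : F.filter (fun y => x ≤ y) = insert x (F.filter (fun y => x < y)) := by
          ext y
          simp only [Finset.mem_filter, Finset.mem_insert]
          constructor
          · rintro ⟨h1, h2⟩
            rcases h2.eq_or_lt with h | h
            · exact Or.inl h.symm
            · exact Or.inr ⟨h1, h⟩
          · rintro (h | h)
            · subst h; exact ⟨hx, le_rfl⟩
            · exact ⟨h.1, h.2.le⟩
        rw [this, Finset.card_insert_of_notMem (by simp)] at e
        have e' : ((F.filter (fun y => x < y)).card : ℝ) + 1 + (F.filter (fun y => ¬ x ≤ y)).card = F.card := by
          exact_mod_cast e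
        linarith
      have le1 : ((F.erase x).card : ℝ) ≤ F.card := by linarith
      have le2 : ((F.filter (fun y => ¬ x ≤ y)).card : ℝ) ≤ F.card := by
        exact_mod_cast Finset.card_le_card s2.1
      have i1 := ih _ s1 (s1.1.trans hF) (le1.trans hM1)
      have i2 := ih _ s2 (s2.1.trans hF) (le2.trans hM1)
      have r : (acount F : ℝ) ≤ acount (F.erase x) + acount (F.filter (fun y => ¬ x ≤ y)) := by
        exact_mod_cast acount_rec F x
      have b2 : Real.exp (t * (F.filter (fun y => ¬ x ≤ y)).card) ≤
          Real.exp (t * (F.erase x).card) * Real.exp (-(t * d)) := by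
        rw [← Real.exp_add]
        apply Real.exp_le_exp.2
        nlinarith
      have b3 : Real.exp (t * F.card) = Real.exp (t * (F.erase x).card) * Real.exp t := by
        rw [← Real.exp_add, ← c1]; ring_nf
      have b4 : 1 + t ≤ Real.exp t := by linarith [Real.add_one_le_exp t]
      have b5 : Real.exp (t * (F.erase x).card) + Real.exp (t * (F.filter (fun y => ¬ x ≤ y)).card) ≤
          Real.exp (t * F.card) := by
        rw [b3]
        have := Real.exp_pos (t * (F.erase x).card)
        nlinarith
      calc (acount F : ℝ) ≤ B * (Real.exp (t * (F.erase x).card) + Real.exp (t * (F.filter (fun y => ¬ x ≤ y)).card)) := by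
            rw [mul_add]; linarith
        _ ≤ _ := mul_le_mul_of_nonneg_left b5 hB0

theorem exists_deg {α : Type*} [PartialOrder α] (F : Finset α) (e : ℝ) (hF : 0 < F.card)
    (h : e * F.card ≤ (((F ×ˢ F).filter (fun p => p.1 < p.2)).card : ℝ)) :
    ∃ x ∈ F, e ≤ ((F.filter (fun y => x < y)).card : ℝ) := by
  by_contra hcon
  push Not at hcon
  have h1 : (((F ×ˢ F).filter (fun p => p.1 < p.2)).card : ℝ) = ∑ x ∈ F, ((F.filter (fun y => x < y)).card : ℝ) := by
    simp only [Finset.card_filter, Nat.cast_sum]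
    rw [Finset.sum_product]
  have h2 : ∑ x ∈ F, ((F.filter (fun y => x < y)).card : ℝ) < ∑ x ∈ F, e :=
    Finset.sum_lt_sum_of_nonempty (Finset.card_pos.1 hF) hcon
  rw [Finset.sum_const, nsmul_eq_mul] at h2
  linarith

theorem main_bound (m : ℕ) (D : ℕ) (hD : 2 ≤ D) (N : Finset (Fin D → Fin (m+1)))
    (hN : ∀ x, x ∈ N ↔ ∑ i, (x i : ℕ) = D * m / 2) (n : ℝ) (hn : n = (m+1 : ℕ)) :
    (acount (Finset.univ : Finset (Fin D → Fin (m+1))) : ℝ) ≤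
      2 ^ ((1 + (56 * n ^ 4 + 1 + 64 * n + 112 * n ^ 2) * Real.log D / Real.sqrt D) * (N.card : ℝ)) := by
  have hn1 : 1 ≤ n := by rw [hn]; exact_mod_cast Nat.succ_le_succ (Nat.zero_le m)
  have hD2 : (2 : ℝ) ≤ D := by exact_mod_cast hD
  have hD0 : (0 : ℝ) < D := by linarith
  have hs1 : 1 ≤ Real.sqrt D := Real.one_le_sqrt.2 (by linarith)
  have hss : Real.sqrt D * Real.sqrt D = D := Real.mul_self_sqrt (by linarith)
  have hL : 1 / 2 ≤ Real.log D := by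
    have := Real.log_two_gt_d9
    have := Real.log_le_log (by norm_num) hD2
    linarith
  have hexpL : Real.exp (-Real.log D) = 1 / D := by
    rw [Real.exp_neg, Real.exp_log hD0, one_div]
  set L := Real.log D
  set s := Real.sqrt D
  have hs0 : 0 < s := by linarith
  have hsD : s ≤ D := by nlinarith
  -- every layer is at most N
  have hlayer : (n : ℝ) ^ D ≤ 7 * n * s * N.card := by
    rw [hn]
    apply layer_large (m+1) (Nat.succ_pos m) D (by omega) N.card
    intro r
    obtain ⟨g, hg, hc⟩ := box_chain_map m D
    apply Finset.card_le_card_of_injOn g (fun x _ => (hN _).2 (hg x))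
    intro x hx y hy hxy
    simp only [Finset.coe_filter, Finset.mem_univ, true_and, Set.mem_ofPred_eq] at hx hy
    exact eq_of_comp_of_sum (hc x y hxy) (hx.trans hy.symm)
  set T := Finset.univ.filter (fun x : Fin D → Fin (m+1) => ∀ v, (D : ℝ) / (2 * n) ≤
      ((Finset.univ.filter (fun i => x i = v)).card : ℝ)) with hT
  have hTc : (((Finset.univ \ T).card : ℕ) : ℝ) ≤ 28 * n ^ 4 * N.card / s := by
    have h := atypical (m+1) (Nat.succ_pos m) D (by omega)
    rw [← hn] at h
    have e : Finset.univ \ T = Finset.univ.filter (fun x : Fin D → Fin (m+1) => ¬ ∀ v, (D : ℝ) / (2 * n) ≤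
      ((Finset.univ.filter (fun i => x i = v)).card : ℝ)) := by
      ext x; simp [hT]
    rw [e]
    refine h.trans ?_
    rw [div_le_div_iff₀ hD0 hs0]
    calc 4 * n ^ 3 * n ^ D * s ≤ 4 * n ^ 3 * (7 * n * s * N.card) * s := by gcongr
      _ = 28 * n ^ 4 * N.card * (s * s) := by ring
      _ = _ := by rw [hss]
  have hq : 0 < (D : ℝ) / (2 * n) := by positivity
  have hsup : ∀ F ⊆ T, ((F.card : ℝ) - N.card) * (D / (4 * n)) ≤
      (((F ×ˢ F).filter (fun p => p.1 < p.2)).card : ℝ) := by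
    intro F hF
    have := box_supersat N hN ((D : ℝ) / (2 * n)) hq F (fun x hx => (Finset.mem_filter.1 (hF hx)).2)
    have e : (D : ℝ) / (2 * n) / 2 = D / (4 * n) := by field_simp; norm_num
    rw [e] at this
    convert this
  have hNn : (0 : ℝ) ≤ N.card := Nat.cast_nonneg _
  -- stage 2
  have st2 : ∀ F ⊆ T, (F.card : ℝ) ≤ 2 * N.card →
      (acount F : ℝ) ≤ 2 ^ ((1 + L / s) * (N.card : ℝ)) * Real.exp ((8 * n / s) * F.card) := by
    apply acount_exp T ((1 + L / s) * N.card) (2 * N.card) (L * s / (8 * n)) (8 * n / s) _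
      (by positivity) (by positivity)
    · have : 8 * n / s * (L * s / (8 * n)) = L := by field_simp
      rw [this, hexpL]
      rw [div_le_div_iff₀ hD0 hs0]
      nlinarith
    · intro F _ hF
      calc (acount F : ℝ) ≤ 2 ^ F.card := by exact_mod_cast acount_le_two_pow F
        _ = (2 : ℝ) ^ (F.card : ℝ) := (Real.rpow_natCast _ _).symm
        _ ≤ _ := Real.rpow_le_rpow_of_exponent_le (by norm_num) hF
    · intro F hFT h1 h2
      have hF0 : 0 < (F.card : ℝ) := lt_of_le_of_lt (by positivity) h1
      apply exists_deg F _ (by exact_mod_cast hF0)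
      refine le_trans ?_ (hsup F hFT)
      have a1 : L / s * N.card ≤ F.card - N.card := by linarith
      calc L * s / (8 * n) * F.card ≤ L * s / (8 * n) * (2 * N.card) := by gcongr
        _ = (L / s * N.card) * ((s * s) / (4 * n)) := by field_simp; ring
        _ = (L / s * N.card) * (D / (4 * n)) := by rw [hss]
        _ ≤ _ := by gcongr
  -- stage 1
  have st1 := acount_exp T (2 * N.card) T.card (D / (8 * n)) (8 * n * L / D)
    (2 ^ ((1 + L / s) * (N.card : ℝ)) * Real.exp ((8 * n / s) * (2 * N.card)))
      (by positivity) (by positivity) (by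
        have : 8 * n * L / D * (D / (8 * n)) = L := by field_simp
        rw [this, hexpL]
        gcongr
        nlinarith) (by
        intro F hF hc
        refine (st2 F hF hc).trans ?_
        gcongr) (by
        intro F hFT h1 _
        have hF0 : 0 < (F.card : ℝ) := lt_of_le_of_lt (by positivity) h1
        apply exists_deg F _ (by exact_mod_cast hF0)
        refine le_trans ?_ (hsup F hFT)
        calc (D : ℝ) / (8 * n) * F.card = (F.card / 2) * (D / (4 * n)) := by field_simp; norm_num
          _ ≤ _ := by
            gcongr
            linarith) T le_rfl le_rfl
  have hTn : (T.card : ℝ) ≤ n ^ D := by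
    have := Finset.card_le_univ T
    rw [Fintype.card_fun, Fintype.card_fin, Fintype.card_fin] at this
    rw [hn]; exact_mod_cast this
  have hexp : ∀ u : ℝ, 0 ≤ u → Real.exp u ≤ 2 ^ (2 * u) := by
    intro u hu
    rw [Real.rpow_def_of_pos (by norm_num)]
    apply Real.exp_le_exp.2
    have := Real.log_two_gt_d9
    nlinarith
  have hsplit : (acount (Finset.univ : Finset (Fin D → Fin (m+1))) : ℝ) ≤ 2 ^ (Finset.univ \ T).card * acount T := by
    have h := acount_split Finset.univ T (Finset.subset_univ _)
    have h' : (acount (Finset.univ : Finset (Fin D → Fin (m+1))) : ℝ) ≤ ((2 ^ _ * acount T : ℕ) : ℝ) :=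
      Nat.cast_le.2 h
    rw [Nat.cast_mul, Nat.cast_pow, Nat.cast_ofNat] at h'
    convert h'
  have hs' : 1 / s ≤ 2 * (L / s) := by
    rw [← mul_div_assoc]; gcongr; linarith
  have ht1 : 8 * n * L / D * T.card ≤ 56 * n ^ 2 * (L / s) * N.card := by
    calc 8 * n * L / D * T.card ≤ 8 * n * L / D * (7 * n * s * N.card) := by
          gcongr; exact hTn.trans hlayer
      _ = 8 * n * L / (s * s) * (7 * n * s * N.card) := by rw [hss]
      _ = _ := by field_simp; ring
  calc (acount (Finset.univ : Finset (Fin D → Fin (m+1))) : ℝ) ≤ 2 ^ (Finset.univ \ T).card * acount T := hsplit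
    _ ≤ 2 ^ (28 * n ^ 4 * N.card / s) * ((2 ^ ((1 + L / s) * (N.card : ℝ)) * 2 ^ (2 * ((8 * n / s) * (2 * N.card)))) *
        2 ^ (2 * (56 * n ^ 2 * (L / s) * N.card))) := by
        refine mul_le_mul ?_ (st1.trans ?_) (by positivity) (by positivity)
        · rw [← Real.rpow_natCast]
          exact Real.rpow_le_rpow_of_exponent_le (by norm_num) hTc
        · refine mul_le_mul (mul_le_mul_of_nonneg_left (hexp _ (by positivity)) (by positivity)) ?_
            (by positivity) (by positivity)
          exact (Real.exp_le_exp.2 ht1).trans (hexp _ (by positivity))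
    _ = 2 ^ (28 * n ^ 4 * N.card / s + (((1 + L / s) * (N.card : ℝ) + 2 * ((8 * n / s) * (2 * N.card))) +
        2 * (56 * n ^ 2 * (L / s) * N.card))) := by
        rw [Real.rpow_add (by norm_num), Real.rpow_add (by norm_num), Real.rpow_add (by norm_num)]
    _ ≤ _ := by
        apply Real.rpow_le_rpow_of_exponent_le (by norm_num)
        have e1 : 28 * n ^ 4 * N.card / s + (((1 + L / s) * (N.card : ℝ) + 2 * ((8 * n / s) * (2 * N.card))) +
          2 * (56 * n ^ 2 * (L / s) * N.card)) =
          ((28 * n ^ 4 + 32 * n) * N.card) * (1 / s) + (1 + L / s + 112 * n ^ 2 * (L / s)) * N.card := by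
          ring
        have e2 := mul_le_mul_of_nonneg_left hs' (by positivity : 0 ≤ (28 * n ^ 4 + 32 * n) * (N.card : ℝ))
        rw [e1]
        refine (add_le_add_left e2 _).trans (le_of_eq ?_)
        ring

/-- Theorem 2: for every `n ≥ 2` there is a constant `C_n > 0` such that for every
`D ≥ 2`, the number of antichains in the box `{1,...,n}^D` (modelled as `Fin D → Fin n`,
with `x i` standing for the value `x i + 1 ∈ {1,...,n}`, carrying the product order) is
at most `2^{(1 + C_n·(log D)/√D)·N_{D,n}}`, where `N_{D,n}` is the size of the middle
layer `{x : Σ (x i + 1) = ⌊D(n+1)/2⌋}`. -/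
theorem stmt_18 (n : ℕ) (hn : 2 ≤ n) :
    ∃ C : ℝ, 0 < C ∧ ∀ D : ℕ, 2 ≤ D →
      (Nat.card {A : Finset (Fin D → Fin n) //
          IsAntichain (· ≤ ·) (A : Set (Fin D → Fin n))} : ℝ) ≤
        2 ^ ((1 + C * Real.log D / Real.sqrt D) *
          ((Finset.univ.filter
            (fun x : Fin D → Fin n => ∑ i, ((x i : ℕ) + 1) = D * (n + 1) / 2)).card : ℝ)) := by
  obtain ⟨m, rfl⟩ : ∃ m, n = m + 1 := ⟨n - 1, by omega⟩
  refine ⟨56 * ((m + 1 : ℕ) : ℝ) ^ 4 + 1 + 64 * ((m + 1 : ℕ) : ℝ) + 112 * ((m + 1 : ℕ) : ℝ) ^ 2,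
    by positivity, fun D hD => ?_⟩
  have h := main_bound m D hD (Finset.univ.filter
    (fun x : Fin D → Fin (m+1) => ∑ i, ((x i : ℕ) + 1) = D * (m + 1 + 1) / 2)) (by
      intro x
      simp only [Finset.mem_filter, Finset.mem_univ, true_and, Finset.sum_add_distrib,
        Finset.sum_const, Finset.card_univ, Fintype.card_fin, smul_eq_mul, mul_one]
      have : D * (m + 1 + 1) = D * m + 2 * D := by ring
      rw [this]
      omega) _ rfl
  have e : Nat.card {A : Finset (Fin D → Fin (m+1)) //
      IsAntichain (· ≤ ·) (A : Set (Fin D → Fin (m+1)))} =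
      acount (Finset.univ : Finset (Fin D → Fin (m+1))) := by
    rw [Nat.card_eq_fintype_card, Fintype.card_subtype]
    unfold acount
    rw [Finset.powerset_univ]
  rw [e]
  exact h
end
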